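/- arXiv:1903.03499 — 4 statements merged into one kernel-verified Lean document; each statement's English description precedes it below -/
import Mathlib

section
/- There is a constant C_n, depending only on n, with the following property (the Euclidean-space instance of the paper's Theorem 0.1 bounding dim P_d for ancient mean curvature flows): for every real d ≥ 1, if u_1, …, u_ℓ : ℝⁿ × (−∞,0) → ℝ are linearly independent functions such that each u_i is smooth and caloric (∂_t u_i = Δ_x u_i pointwise) and for each i there is a constant C_i with |u_i(x,t)| ≤ C_i (1 + ‖x‖^d + |t|^{d/2}) for all x ∈ ℝⁿ and t < 0, then ℓ ≤ C_n · dⁿ. -/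
open MeasureTheory Real

/-- The Euclidean Laplacian of `u` at `x`, as the sum of second partial derivatives. -/
noncomputable def lap {n : ℕ} (u : EuclideanSpace ℝ (Fin n) → ℝ)
    (x : EuclideanSpace ℝ (Fin n)) : ℝ :=
  ∑ i : Fin n, fderiv ℝ (fun y => fderiv ℝ u y (EuclideanSpace.single i 1)) x
    (EuclideanSpace.single i 1)

open Filter Topology

namespace HeatAux

abbrev V (n : ℕ) := EuclideanSpace ℝ (Fin n) × ℝ

noncomputable def D {n : ℕ} (v : V n) (f : V n → ℝ) : V n → ℝ := fun p => fderiv ℝ f p v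

noncomputable def e {n : ℕ} (i : Fin n) : V n := (EuclideanSpace.single i 1, 0)

noncomputable def τ {n : ℕ} : V n := (0, 1)

abbrev Sm {n : ℕ} (f : V n → ℝ) : Prop := ContDiff ℝ (⊤ : ℕ∞) f

variable {n : ℕ}

lemma Sm.diff {f : V n → ℝ} (hf : Sm f) : Differentiable ℝ f := hf.differentiable (by simp)

lemma Sm.D {f : V n → ℝ} (hf : Sm f) (v : V n) : Sm (D v f) := by
  unfold HeatAux.D
  exact (hf.fderiv_right (m := ((⊤ : ℕ∞) : WithTop ℕ∞)) (by simp)).clm_apply contDiff_const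

lemma Sm.add {f g : V n → ℝ} (hf : Sm f) (hg : Sm g) : Sm (f + g) := ContDiff.add hf hg
lemma Sm.mul {f g : V n → ℝ} (hf : Sm f) (hg : Sm g) : Sm (f * g) := ContDiff.mul hf hg
lemma Sm.const_smul {f : V n → ℝ} (hf : Sm f) (c : ℝ) : Sm (c • f) := contDiff_const.mul hf
lemma Sm.sum {ι : Type*} (s : Finset ι) {f : ι → V n → ℝ} (hf : ∀ i, Sm (f i)) :
    Sm (∑ i ∈ s, f i) := by
  have := ContDiff.sum (𝕜 := ℝ) (n := ((⊤ : ℕ∞) : WithTop ℕ∞)) (s := s)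
      (f := f) (fun i _ => hf i)
  convert this using 1
  ext; simp

lemma D_comm {f : V n → ℝ} (hf : Sm f) (v w : V n) : D v (D w f) = D w (D v f) := by
  have key : ∀ (a b p : V n), D a (D b f) p = fderiv ℝ (fderiv ℝ f) p a b := by
    intro a b p
    have h1 : DifferentiableAt ℝ (fderiv ℝ f) p :=
      (hf.fderiv_right (m := 1) (by norm_cast)).differentiable (by simp) p
    unfold D
    rw [fderiv_clm_apply h1 (differentiableAt_const b)]
    simp
  funext p
  rw [key, key]
  have := (hf.contDiffAt (x := p)).isSymmSndFDerivAt (by simp; norm_cast)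
  exact this v w

lemma D_mul {f g : V n → ℝ} (hf : Sm f) (hg : Sm g) (v : V n) :
    D v (f * g) = f * D v g + g * D v f := by
  funext p
  unfold D
  rw [fderiv_mul (hf.diff p) (hg.diff p)]
  simp

lemma D_add {f g : V n → ℝ} (hf : Sm f) (hg : Sm g) (v : V n) :
    D v (f + g) = D v f + D v g := by
  funext p
  unfold D
  rw [fderiv_add (hf.diff p) (hg.diff p)]
  simp

lemma D_smul {f : V n → ℝ} (hf : Sm f) (c : ℝ) (v : V n) :
    D v (c • f) = c • D v f := by
  funext p
  unfold D
  rw [fderiv_const_smul (hf.diff p)]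
  simp

lemma D_sum {ι : Type*} (s : Finset ι) {f : ι → V n → ℝ} (hf : ∀ i, Sm (f i)) (v : V n) :
    D v (∑ i ∈ s, f i) = ∑ i ∈ s, D v (f i) := by
  funext p
  unfold D
  rw [fderiv_sum (fun i _ => (hf i).diff p)]
  simp

/-- heat operator -/
noncomputable def L (f : V n → ℝ) : V n → ℝ := D τ f - ∑ i, D (e i) (D (e i) f)

lemma L_add {f g : V n → ℝ} (hf : Sm f) (hg : Sm g) : L (f + g) = L f + L g := by
  unfold L
  simp_rw [D_add hf hg, D_add (hf.D _) (hg.D _), Finset.sum_add_distrib]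
  abel

lemma L_smul {f : V n → ℝ} (hf : Sm f) (c : ℝ) : L (c • f) = c • L f := by
  unfold L
  simp_rw [D_smul hf, D_smul (hf.D _), smul_sub, Finset.smul_sum]

lemma L_mul {f g : V n → ℝ} (hf : Sm f) (hg : Sm g) :
    L (f * g) = f * L g + g * L f - 2 * ∑ i, D (e i) f * D (e i) g := by
  unfold L
  have h : ∀ i : Fin n, D (e i) (D (e i) (f * g)) = f * D (e i) (D (e i) g)
      + g * D (e i) (D (e i) f) + 2 * (D (e i) f * D (e i) g) := by
    intro i
    rw [D_mul hf hg, D_add (hf.mul (hg.D _)) (hg.mul (hf.D _)), D_mul hf (hg.D _),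
      D_mul hg (hf.D _)]
    ring
  simp_rw [h, Finset.sum_add_distrib, D_mul hf hg, ← Finset.mul_sum]
  ring

lemma L_D {f : V n → ℝ} (hf : Sm f) (v : V n) : L (D v f) = D v (L f) := by
  have h1 : L f = D τ f + (-1 : ℝ) • ∑ i, D (e i) (D (e i) f) := by
    unfold L; simp [sub_eq_add_neg]
  have hs : Sm (∑ i : Fin n, D (e i) (D (e i) f)) := Sm.sum _ (fun i => (hf.D _).D _)
  rw [h1, D_add (hf.D _) (hs.const_smul (-1 : ℝ)), D_smul hs, D_sum _ (fun i => (hf.D _).D _)]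
  unfold L
  simp_rw [D_comm (hf.D (e _)) v (e _), D_comm hf v]
  simp [sub_eq_add_neg]

/-- derivative along lines -/
lemma hasDerivAt_line {f : V n → ℝ} (hf : Sm f) (p v : V n) (s : ℝ) :
    HasDerivAt (fun s : ℝ => f (p + s • v)) (D v f (p + s • v)) s := by
  have h1 : HasDerivAt (fun s : ℝ => p + s • v) v s := by
    simpa using ((hasDerivAt_id s).smul_const v).const_add p
  exact (hf.diff (p + s • v)).hasFDerivAt.comp_hasDerivAt s h1

lemma second_deriv_nonpos {f : V n → ℝ} (hf : Sm f) (p v : V n)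
    (hmax : IsLocalMax (fun s : ℝ => f (p + s • v)) 0) : D v (D v f) p ≤ 0 := by
  by_contra! hpos
  have hd : deriv (fun s : ℝ => f (p + s • v)) = fun s => D v f (p + s • v) :=
    funext fun s => (hasDerivAt_line hf p v s).deriv
  have hdd : deriv (fun s : ℝ => D v f (p + s • v)) = fun s => D v (D v f) (p + s • v) :=
    funext fun s => (hasDerivAt_line (hf.D v) p v s).deriv
  have hmin : IsLocalMin (fun s : ℝ => f (p + s • v)) 0 := by
    apply isLocalMin_of_deriv_deriv_pos
    · rw [hd, hdd]; simpa using hpos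
    · exact hmax.deriv_eq_zero
    · exact (hasDerivAt_line hf p v 0).continuousAt
  have hc : (fun s : ℝ => f (p + s • v)) =ᶠ[𝓝 0] fun _ => f (p + (0:ℝ) • v) := by
    filter_upwards [hmin, hmax] with s h1 h2
    exact le_antisymm h2 h1
  have := hc.deriv.deriv.eq_of_nhds
  rw [hd, hdd] at this
  simp at this
  linarith

lemma time_deriv_nonneg {f : V n → ℝ} (hf : Sm f) (p : V n) (δ : ℝ) (hδ : 0 < δ)
    (h : ∀ s : ℝ, -δ < s → s < 0 → f (p + s • τ) ≤ f p) : 0 ≤ D τ f p := by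
  have h0 := hasDerivAt_line hf p τ 0
  have h1 := h0.hasDerivWithinAt (s := Set.Iio 0)
  rw [hasDerivWithinAt_iff_tendsto_slope' (by simp)] at h1
  simp only [zero_smul, add_zero] at h1
  refine ge_of_tendsto h1 ?_
  have : Set.Ioo (-δ) 0 ∈ 𝓝[<] (0:ℝ) := Ioo_mem_nhdsLT (by linarith)
  filter_upwards [this] with s hs
  rw [slope_def_field]
  apply div_nonneg_of_nonpos
  · have := h s hs.1 hs.2
    simpa using this
  · linarith [hs.2]

lemma max_strict {w : V n → ℝ} (hw : Sm w) {R : ℝ} (hR : 0 < R)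
    (h : ∀ p : V n, ‖p.1‖ < R → -R^2 < p.2 → p.2 ≤ 0 → L w p < 0) (B : ℝ)
    (hB : ∀ p : V n, ‖p.1‖ ≤ R → -R^2 ≤ p.2 → p.2 ≤ 0 → (‖p.1‖ = R ∨ p.2 = -R^2) → w p ≤ B) :
    ∀ p : V n, ‖p.1‖ ≤ R → -R^2 ≤ p.2 → p.2 ≤ 0 → w p ≤ B := by
  have hK : IsCompact (Metric.closedBall (0 : EuclideanSpace ℝ (Fin n)) R ×ˢ Set.Icc (-R^2) 0) :=
    (isCompact_closedBall _ _).prod isCompact_Icc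
  obtain ⟨q, hq, hmax⟩ := hK.exists_isMaxOn ⟨(0, 0), by
    simp only [Set.mem_prod, Set.mem_Icc]; simp; exact ⟨hR.le, by positivity⟩⟩ hw.continuous.continuousOn
  simp only [Set.mem_prod, mem_closedBall_zero_iff, Set.mem_Icc] at hq
  have hmax' : ∀ p : V n, ‖p.1‖ ≤ R → -R^2 ≤ p.2 → p.2 ≤ 0 → w p ≤ w q := by
    intro p h1 h2 h3
    apply hmax
    simp only [Set.mem_prod, mem_closedBall_zero_iff, Set.mem_Icc]
    exact ⟨h1, h2, h3⟩
  suffices hs : w q ≤ B from fun p h1 h2 h3 => (hmax' p h1 h2 h3).trans hs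
  by_cases hb : ‖q.1‖ = R ∨ q.2 = -R^2
  · exact hB q hq.1 hq.2.1 hq.2.2 hb
  push Not at hb
  have hb1 := lt_of_le_of_ne hq.1 hb.1
  have hb2 := lt_of_le_of_ne hq.2.1 hb.2.symm
  exfalso
  have hL := h q hb1 hb2 hq.2.2
  have ht : 0 ≤ D τ w q := by
    apply time_deriv_nonneg hw q (q.2 + R^2) (by linarith)
    intro s h1 h2
    apply hmax'
    · simpa [τ] using hq.1
    · simp [τ]; linarith
    · simp [τ]; linarith [hq.2.2]
  have hx : ∀ i, D (e i) (D (e i) w) q ≤ 0 := by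
    intro i
    apply second_deriv_nonpos hw
    have hcont : Continuous (fun s : ℝ => ‖(q + s • e i).1‖) := by fun_prop
    have : ∀ᶠ s in 𝓝 (0:ℝ), ‖(q + s • e i).1‖ < R :=
      hcont.continuousAt.eventually_lt continuousAt_const (by simpa using hb1)
    filter_upwards [this] with s hs
    simp only [zero_smul, add_zero]
    apply hmax' _ hs.le
    · simpa [e] using hq.2.1
    · simpa [e] using hq.2.2
  have : L w q = D τ w q - ∑ i, D (e i) (D (e i) w) q := by simp [L]
  have := Finset.sum_nonpos (fun i (_ : i ∈ Finset.univ) => hx i)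
  linarith

lemma D_linear (l : V n →L[ℝ] ℝ) (v : V n) : D v (fun p => l p) = fun _ => l v := by
  funext p; simp [D]

lemma D_const (c : ℝ) (v : V n) : D v (fun _ => c) = 0 := by
  funext p; simp [D]

noncomputable def tt : V n → ℝ := fun p => p.2
lemma sm_tt : Sm (tt (n := n)) := contDiff_snd
lemma D_tt (v : V n) : D v (tt (n := n)) = fun _ => v.2 := D_linear (ContinuousLinearMap.snd ℝ _ _) v

lemma L_tt : L (tt (n := n)) = 1 := by
  unfold L
  simp_rw [D_tt, D_const]
  simp [τ]; rfl

lemma max_weak {w : V n → ℝ} (hw : Sm w) {R : ℝ} (hR : 0 < R)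
    (h : ∀ p : V n, ‖p.1‖ < R → -R^2 < p.2 → p.2 ≤ 0 → L w p ≤ 0) (B : ℝ)
    (hB : ∀ p : V n, ‖p.1‖ ≤ R → -R^2 ≤ p.2 → p.2 ≤ 0 → (‖p.1‖ = R ∨ p.2 = -R^2) → w p ≤ B) :
    ∀ p : V n, ‖p.1‖ ≤ R → -R^2 ≤ p.2 → p.2 ≤ 0 → w p ≤ B := by
  intro p h1 h2 h3
  have key : ∀ ε : ℝ, 0 < ε → w p ≤ B + ε * R^2 := by
    intro ε hε
    have := max_strict (w := w + (-ε) • tt) (hw.add (sm_tt.const_smul (-ε))) hR ?_ (B + ε * R^2) ?_ p h1 h2 h3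
    · simp [tt] at this
      nlinarith
    · intro q a b c
      rw [L_add hw (sm_tt.const_smul (-ε)), L_smul sm_tt, L_tt]
      have := h q a b c
      simp; linarith
    · intro q a b c d
      have := hB q a b c d
      simp [tt]
      nlinarith
  apply le_of_forall_pos_le_add
  intro ε hε
  have := key (ε / R^2) (by positivity)
  rwa [div_mul_cancel₀ _ (by positivity)] at this

end HeatAux

namespace HeatAux
variable {n : ℕ}

noncomputable def ρ (c : ℝ) : V n → ℝ := fun p => c - ‖p.1‖^2
noncomputable def θ (c : ℝ) : V n → ℝ := fun p => p.2 + c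
lemma sm_ρ (c : ℝ) : Sm (ρ (n := n) c) := contDiff_const.sub (contDiff_fst.norm_sq ℝ)
lemma sm_θ (c : ℝ) : Sm (θ (n := n) c) := contDiff_snd.add contDiff_const

lemma D_ρ (c : ℝ) (v : V n) : D v (ρ c) = fun p => -2 * inner ℝ p.1 v.1 := by
  funext p
  have h : HasFDerivAt (ρ (n := n) c) _ p :=
    ((hasFDerivAt_fst (𝕜 := ℝ) (p := p)).norm_sq).const_sub c
  unfold D
  rw [h.fderiv]
  simp

lemma D_θ (c : ℝ) (v : V n) : D v (θ c) = fun _ => v.2 := by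
  funext p
  have h : HasFDerivAt (θ (n := n) c) _ p :=
    ((hasFDerivAt_snd (𝕜 := ℝ) (p := p))).add_const c
  unfold D
  rw [h.fderiv]
  simp

lemma DD_ρ (c : ℝ) (i : Fin n) : D (e i) (D (e i) (ρ c)) = fun _ => -2 := by
  rw [D_ρ]
  funext p
  have h : HasFDerivAt (fun p : V n => -2 * inner ℝ p.1 (e i : V n).1) _ p :=
    (((hasFDerivAt_fst (𝕜 := ℝ) (p := p)).inner ℝ (hasFDerivAt_const (e i : V n).1 p))).const_mul (-2)
  unfold D
  rw [h.fderiv]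
  simp [e]

lemma L_ρ (c : ℝ) : L (ρ (n := n) c) = fun _ => 2 * (n : ℝ) := by
  unfold L
  simp_rw [DD_ρ, D_ρ]
  funext p
  simp [τ]; ring

lemma L_θ (c : ℝ) : L (θ (n := n) c) = fun _ => 1 := by
  unfold L
  simp_rw [D_θ, D_const]
  funext p
  simp [τ]

noncomputable def η (c : ℝ) : V n → ℝ := ρ c * θ c
lemma sm_η (c : ℝ) : Sm (η (n := n) c) := (sm_ρ c).mul (sm_θ c)

lemma D_η (c : ℝ) (i : Fin n) (p : V n) : D (e i) (η c) p = -2 * p.1 i * (p.2 + c) := by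
  unfold η
  rw [D_mul (sm_ρ c) (sm_θ c), D_ρ, D_θ]
  have : inner ℝ p.1 (EuclideanSpace.single i (1:ℝ)) = p.1 i := by
    simp [EuclideanSpace.inner_single_right]
  simp only [e, θ, Pi.add_apply, Pi.mul_apply, this]
  ring

lemma L_η (c : ℝ) (p : V n) : L (η c) p = (c - ‖p.1‖^2) + 2 * n * (p.2 + c) := by
  unfold η
  rw [L_mul (sm_ρ c) (sm_θ c), L_ρ, L_θ]
  simp_rw [D_θ]
  simp [e, θ, ρ]
  ring

lemma sum_Dη (c : ℝ) (p : V n) :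
    ∑ i, (D (e i) (η c) p)^2 = 4 * ‖p.1‖^2 * (p.2 + c)^2 := by
  simp_rw [D_η, EuclideanSpace.norm_sq_eq]
  rw [Finset.mul_sum, Finset.sum_mul]
  refine Finset.sum_congr rfl fun i _ => ?_
  simp; ring

lemma L_sq {f : V n → ℝ} (hf : Sm f) (p : V n) :
    L (f * f) p = 2 * f p * L f p - 2 * ∑ i, (D (e i) f p)^2 := by
  rw [L_mul hf hf]
  simp [pow_two]
  ring

lemma grad_est {u : V n → ℝ} (hu : Sm u) (hL : ∀ p : V n, p.2 ≤ 0 → L u p = 0)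
    (j : Fin n) (hLj : ∀ p : V n, p.2 ≤ 0 → L (D (e j) u) p = 0)
    {R : ℝ} (hR : 0 < R) {M : ℝ}
    (hM : ∀ p : V n, ‖p.1‖ ≤ R → -R^2 ≤ p.2 → p.2 ≤ 0 → |u p| ≤ M)
    (p : V n) (h1 : ‖p.1‖ ≤ R / 2) (h2 : -(R/2)^2 ≤ p.2) (h3 : p.2 ≤ 0) :
    (D (e j) u p)^2 ≤ 4 * (2 * n + 13) * M^2 / R^2 := by
  set v := D (e j) u with hv
  have sv : Sm v := hu.D _
  set A : ℝ := (2 * n + 13) * R^6 with hA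
  have hA0 : 0 ≤ A := by positivity
  have s1 := (sm_η (n := n) (R^2)).mul (sm_η (n := n) (R^2))
  have s2 := sv.mul sv
  have s3 := (hu.mul hu)
  have main := max_weak (w := (η (R^2) * η (R^2)) * (v * v) + A • (u * u))
    ((s1.mul s2).add (s3.const_smul A)) hR ?_ (A * M^2) ?_ p (by linarith) (by nlinarith) h3
  · have hM0 : 0 ≤ M := (abs_nonneg _).trans (hM p (by linarith) (by nlinarith) h3)
    simp only [Pi.add_apply, Pi.mul_apply, Pi.smul_apply, smul_eq_mul] at main
    have hη : R^4 / 2 ≤ η (R^2) p := by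
      have a1 : 3 / 4 * R^2 ≤ R^2 - ‖p.1‖^2 := by
        nlinarith [norm_nonneg p.1]
      have a2 : 3 / 4 * R^2 ≤ p.2 + R^2 := by nlinarith
      have := mul_le_mul a1 a2 (by positivity) (by nlinarith [sq_nonneg R])
      simp only [η, ρ, θ, Pi.mul_apply]
      nlinarith [pow_pos hR 4]
    have hη2 : (R^4/2)^2 ≤ η (R^2) p * η (R^2) p := by
      rw [pow_two]; exact mul_self_le_mul_self (by positivity) hη
    have h5 : (R^4/2)^2 * (v p)^2 ≤ A * M^2 := by
      have := mul_le_mul_of_nonneg_right hη2 (sq_nonneg (v p))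
      have := mul_nonneg hA0 (mul_self_nonneg (u p))
      nlinarith
    rw [le_div_iff₀ (by positivity)]
    have h6 : (v p ^ 2 * R^2) * R^6 ≤ (4 * (2 * n + 13) * M^2) * R^6 := by
      rw [hA] at h5
      nlinarith
    exact le_of_mul_le_mul_right h6 (by positivity)
  · intro q a b c
    rw [L_add (s1.mul s2) (s3.const_smul A), L_smul s3, L_mul s1 s2]
    simp only [Pi.add_apply, Pi.mul_apply, Pi.smul_apply, Pi.sub_apply, smul_eq_mul, Finset.sum_apply]
    rw [L_sq sv, L_sq (sm_η _), L_sq hu, hL q c, hLj q c, L_η, sum_Dη]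
    simp_rw [D_mul sv sv, D_mul (sm_η (n := n) (R^2)) (sm_η (n := n) (R^2))]
    simp only [Pi.add_apply, Pi.mul_apply, Pi.ofNat_apply]
    set E := η (R^2) q with hE
    set y := v q
    have hx0 := norm_nonneg q.1
    have hxR : ‖q.1‖^2 ≤ R^2 := by nlinarith
    have hE' : E = (R^2 - ‖q.1‖^2) * (q.2 + R^2) := rfl
    have hcross : -2 * ∑ i, (E * D (e i) (η (R^2)) q + E * D (e i) (η (R^2)) q) * (y * D (e i) v q + y * D (e i) v q)
        ≤ 2 * E^2 * ∑ i, (D (e i) v q)^2 + 8 * y^2 * ∑ i, (D (e i) (η (R^2)) q)^2 := by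
      rw [Finset.mul_sum, Finset.mul_sum, Finset.mul_sum, ← Finset.sum_add_distrib]
      refine Finset.sum_le_sum fun i _ => ?_
      nlinarith [sq_nonneg (E * D (e i) v q + 2 * y * D (e i) (η (R^2)) q)]
    rw [sum_Dη] at hcross
    have hgrad : y^2 ≤ ∑ i, (D (e i) u q)^2 :=
      Finset.single_le_sum (f := fun i => (D (e i) u q)^2) (fun i _ => sq_nonneg _) (Finset.mem_univ j)
    have hAg := mul_le_mul_of_nonneg_left hgrad hA0
    have b1 : 0 ≤ R^2 - ‖q.1‖^2 := by linarith
    have b2 : 0 ≤ q.2 + R^2 := by linarith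
    have b3 : q.2 + R^2 ≤ R^2 := by linarith
    have b4 : R^2 - ‖q.1‖^2 ≤ R^2 := by nlinarith
    have hE0 : 0 ≤ E := by rw [hE']; positivity
    have hE1 : E ≤ R^2 * R^2 := by rw [hE']; exact mul_le_mul b4 b3 b2 (by positivity)
    have hLη : (R^2 - ‖q.1‖^2) + 2 * n * (q.2 + R^2) ≤ (2 * n + 1) * R^2 := by
      have : 2 * (n:ℝ) * (q.2 + R^2) ≤ 2 * n * R^2 := by gcongr
      linarith
    have c1 : E * ((R^2 - ‖q.1‖^2) + 2 * n * (q.2 + R^2)) ≤ (R^2 * R^2) * ((2 * n + 1) * R^2) :=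
      mul_le_mul hE1 hLη (by positivity) (by positivity)
    have c2 : ‖q.1‖^2 * (q.2 + R^2)^2 ≤ R^2 * (R^2)^2 := by gcongr
    have c3 : y^2 * (2 * (E * ((R^2 - ‖q.1‖^2) + 2 * n * (q.2 + R^2))) + 24 * (‖q.1‖^2 * (q.2 + R^2)^2))
        ≤ y^2 * (2 * A) := by
      apply mul_le_mul_of_nonneg_left _ (sq_nonneg _)
      rw [hA]; nlinarith
    linarith
  · intro q a b c d
    have hη : η (R^2) q = 0 := by
      simp only [η, ρ, θ, Pi.mul_apply]
      rcases d with d | d <;> rw [d] <;> ring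
    simp only [Pi.add_apply, Pi.mul_apply, Pi.smul_apply, smul_eq_mul, hη]
    have := hM q a b c
    have : u q * u q ≤ M^2 := by
      rw [← pow_two, ← sq_abs]; gcongr
    have := mul_le_mul_of_nonneg_left this hA0
    linarith

/-- ancient caloric -/
def Cal (u : V n → ℝ) : Prop := ∀ p : V n, p.2 ≤ 0 → L u p = 0

lemma eq_zero_of_neg {f : V n → ℝ} (hf : Sm f) (h : ∀ p : V n, p.2 < 0 → f p = 0) :
    ∀ p : V n, p.2 ≤ 0 → f p = 0 := by
  intro p hp
  have hc : Tendsto (fun s : ℝ => f (p + s • τ)) (𝓝[<] 0) (𝓝 (f (p + (0:ℝ) • τ))) :=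
    ((hasDerivAt_line hf p τ 0).continuousAt.tendsto).mono_left nhdsWithin_le_nhds
  have : Tendsto (fun s : ℝ => f (p + s • τ)) (𝓝[<] 0) (𝓝 0) := by
    apply tendsto_const_nhds.congr'
    filter_upwards [self_mem_nhdsWithin] with s hs
    have hs : s < 0 := hs
    exact (h _ (by simp [τ]; linarith)).symm
  have := tendsto_nhds_unique hc this
  simpa using this

lemma D_zero_of_neg {f : V n → ℝ} (hf : Sm f) (h : ∀ p : V n, p.2 < 0 → f p = 0) (v : V n) :
    ∀ p : V n, p.2 ≤ 0 → D v f p = 0 := by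
  apply eq_zero_of_neg (hf.D v)
  intro p hp
  have : f =ᶠ[𝓝 p] fun _ => 0 := by
    filter_upwards [(isOpen_lt continuous_snd continuous_const).mem_nhds (show p.2 < 0 from hp)] with q hq
    exact h q hq
  unfold D
  rw [this.fderiv_eq]; simp

lemma sm_L {f : V n → ℝ} (hf : Sm f) : Sm (L f) := by
  have h1 : L f = D τ f + (-1 : ℝ) • ∑ i, D (e i) (D (e i) f) := by
    unfold L; simp [sub_eq_add_neg]
  rw [h1]
  exact (hf.D _).add ((Sm.sum _ fun i => (hf.D _).D _).const_smul _)

lemma Cal.D {u : V n → ℝ} (hu : Sm u) (h : Cal u) (v : V n) : Cal (D v u) := by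
  intro p hp
  rw [L_D hu]
  exact D_zero_of_neg (sm_L hu) (fun q hq => h q hq.le) v p hp

def G (a : ℝ) (u : V n → ℝ) : Prop := ∃ C : ℝ, 0 ≤ C ∧ ∀ R : ℝ, 1 ≤ R → ∀ p : V n, ‖p.1‖ ≤ R →
  -R^2 ≤ p.2 → p.2 ≤ 0 → |u p| ≤ C * R ^ a

lemma G.D {a : ℝ} {u : V n → ℝ} (hu : Sm u) (hc : Cal u) (h : G a u) (j : Fin n) :
    G (a - 1) (D (e j) u) := by
  obtain ⟨C, hC, h⟩ := h
  refine ⟨Real.sqrt (4 * (2 * n + 13)) * C * 2 ^ (a - 1), by positivity, ?_⟩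
  intro R hR p h1 h2 h3
  have hR0 : 0 < R := by linarith
  have := grad_est hu hc j (Cal.D hu hc (e j)) (R := 2 * R) (by linarith) (M := C * (2 * R) ^ a)
    (fun q a b c => h (2*R) (by linarith) q a b c) p (by linarith) (by simpa using h2) h3
  apply abs_le_of_sq_le_sq _ (by positivity)
  refine this.trans (le_of_eq ?_)
  rw [mul_pow (√_ * C * _), mul_pow (√_ * C), mul_pow (√_), Real.sq_sqrt (by positivity), Real.rpow_sub hR0,
    Real.rpow_sub (by norm_num), Real.mul_rpow (by norm_num) hR0.le, Real.rpow_one, Real.rpow_one]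
  field_simp

lemma G.zero {a : ℝ} (ha : a < 0) {u : V n → ℝ} (h : G a u) : ∀ p : V n, p.2 ≤ 0 → u p = 0 := by
  obtain ⟨C, hC, h⟩ := h
  intro p hp
  have ht : Tendsto (fun R : ℝ => C * R ^ a) atTop (𝓝 (C * 0)) := by
    have := tendsto_rpow_neg_atTop (y := -a) (by linarith)
    rw [neg_neg] at this
    exact this.const_mul C
  have : |u p| ≤ C * 0 := by
    refine ge_of_tendsto ht ?_
    filter_upwards [eventually_ge_atTop (max 1 (max ‖p.1‖ |p.2|))] with R hR
    simp only [max_le_iff] at hR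
    refine h R hR.1 p hR.2.1 ?_ hp
    have := neg_abs_le p.2
    nlinarith
  simpa using this

/-- iterated spatial derivatives -/
noncomputable def W (w : List (Fin n)) (u : V n → ℝ) : V n → ℝ := w.foldr (fun i f => D (e i) f) u

@[simp] lemma W_nil (u : V n → ℝ) : W [] u = u := rfl
@[simp] lemma W_cons (i : Fin n) (w) (u : V n → ℝ) : W (i :: w) u = D (e i) (W w u) := rfl

lemma sm_W {u : V n → ℝ} (hu : Sm u) (w : List (Fin n)) : Sm (W w u) := by
  induction w with
  | nil => exact hu
  | cons i w ih => exact ih.D _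

lemma cal_W {u : V n → ℝ} (hu : Sm u) (hc : Cal u) (w : List (Fin n)) : Cal (W w u) := by
  induction w with
  | nil => exact hc
  | cons i w ih => exact ih.D (sm_W hu w) _

lemma G_W {u : V n → ℝ} {a : ℝ} (hu : Sm u) (hc : Cal u) (hg : G a u) (w : List (Fin n)) :
    G (a - w.length) (W w u) := by
  induction w with
  | nil => simpa using hg
  | cons i w ih =>
    have := ih.D (sm_W hu w) (cal_W hu hc w) i
    simp only [W_cons, List.length_cons, Nat.cast_add, Nat.cast_one]
    convert this using 1
    ring

lemma W_perm {u : V n → ℝ} (hu : Sm u) {w w' : List (Fin n)} (h : w.Perm w') : W w u = W w' u := by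
  induction h with
  | nil => rfl
  | cons x _ ih => simp [ih]
  | swap x y l => simp only [W_cons]; exact D_comm (sm_W hu l) _ _
  | trans _ _ h1 h2 => exact h1.trans h2

lemma W_lin {ℓ : ℕ} {u : Fin ℓ → V n → ℝ} (hu : ∀ i, Sm (u i)) (c : Fin ℓ → ℝ) (w : List (Fin n)) :
    W w (∑ i, c i • u i) = ∑ i, c i • W w (u i) := by
  induction w with
  | nil => rfl
  | cons j w ih =>
    simp only [W_cons]
    rw [ih, D_sum _ (fun i => (sm_W (hu i) w).const_smul (c i))]
    simp_rw [D_smul (sm_W (hu _) w)]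

lemma const_of {f : V n → ℝ} (hf : Sm f) (h0 : f 0 = 0) (hx : ∀ i, ∀ p : V n, p.2 ≤ 0 → D (e i) f p = 0)
    (ht : ∀ p : V n, p.2 ≤ 0 → D τ f p = 0) : ∀ p : V n, p.2 ≤ 0 → f p = 0 := by
  intro p hp
  have hlin : ∀ q : V n, q.2 ≤ 0 → D p f q = 0 := by
    intro q hq
    have hp' : p = ∑ i, p.1 i • e i + p.2 • τ := by
      refine Prod.ext ?_ ?_
      · ext j
        simp [e, τ, Prod.fst_sum, Pi.single_apply]
      · simp [e, τ, Prod.snd_sum]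
    unfold D
    rw [hp']
    simp only [map_add, map_sum, map_smul]
    have h1 : ∀ i, fderiv ℝ f q (e i) = 0 := fun i => hx i q hq
    have h2 : fderiv ℝ f q τ = 0 := ht q hq
    simp [h1, h2]
  have := Convex.is_const_of_fderivWithin_eq_zero (𝕜 := ℝ) (f := fun s : ℝ => f ((0 : V n) + s • p)) (convex_Icc (0:ℝ) 1)
    (fun s _ => (hasDerivAt_line hf 0 p s).differentiableAt.differentiableWithinAt)
    (fun s hs => by
      have h := (hasDerivAt_line hf 0 p s)
      rw [hlin _ (by simp; exact mul_nonpos_of_nonneg_of_nonpos hs.1 hp)] at h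
      have h' := h.hasFDerivAt.hasFDerivWithinAt (s := Set.Icc (0:ℝ) 1)
      rw [h'.fderivWithin ((uniqueDiffOn_Icc (by norm_num)) s hs)]
      ext; simp)
    (x := 0) (y := 1) (by simp) (by simp)
  simp [h0] at this
  exact this.symm

lemma vanish {u : V n → ℝ} {d : ℝ} (hu : Sm u) (hc : Cal u) (hg : G d u) (m : ℕ) (hm : d < m + 1)
    (h0 : ∀ w : List (Fin n), w.length ≤ m → W w u 0 = 0) : ∀ p : V n, p.2 ≤ 0 → u p = 0 := by
  have key : ∀ k : ℕ, k ≤ m + 1 → ∀ w : List (Fin n), w.length = m + 1 - k →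
      ∀ p : V n, p.2 ≤ 0 → W w u p = 0 := by
    intro k
    induction k with
    | zero =>
      intro _ w hw
      apply (G_W hu hc hg w).zero
      rw [hw]; push_cast; linarith
    | succ k ih =>
      intro hk w hw
      have hx : ∀ i, ∀ p : V n, p.2 ≤ 0 → D (e i) (W w u) p = 0 := fun i =>
        ih (by omega) (i :: w) (by simp; omega)
      apply const_of (sm_W hu w) (h0 w (by omega)) hx
      intro p hp
      have h1 := cal_W hu hc w p hp
      have h2 : ∀ i, D (e i) (D (e i) (W w u)) p = 0 := fun i =>
        D_zero_of_neg ((sm_W hu w).D _) (fun q hq => hx i q hq.le) _ p hp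
      simpa [L, h2] using h1
  exact key (m + 1) le_rfl [] (by simp)

lemma L_eq {u : V n → ℝ} (hu : Sm u) (x : EuclideanSpace ℝ (Fin n)) (t : ℝ) :
    L u (x, t) = deriv (fun s => u (x, s)) t - lap (fun y => u (y, t)) x := by
  have h1 : deriv (fun s => u (x, s)) t = D τ u (x, t) := by
    have h := (hu.diff (x, t)).hasFDerivAt.comp_hasDerivAt t
      ((hasDerivAt_const t x).prodMk (hasDerivAt_id t))
    exact h.deriv
  have h2 : ∀ (f : V n → ℝ), Sm f → ∀ (y : EuclideanSpace ℝ (Fin n)) (v : EuclideanSpace ℝ (Fin n)),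
      fderiv ℝ (fun z => f (z, t)) y v = D (v, 0) f (y, t) := by
    intro f hf y v
    have h := (hf.diff (y, t)).hasFDerivAt.comp y (hasFDerivAt_prodMk_left (𝕜 := ℝ) y t)
    have h' : fderiv ℝ (fun z => f (z, t)) y = _ := h.fderiv
    rw [h']
    simp [D]
  unfold lap
  rw [h1]
  simp_rw [h2 u hu]
  simp_rw [h2 _ (hu.D _)]
  simp [L, e]

lemma G_of {u : V n → ℝ} {d : ℝ} (hd : 1 ≤ d) (hu : Sm u) (h : ∃ Ci : ℝ, ∀ (x : EuclideanSpace ℝ (Fin n)) (t : ℝ), t < 0 →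
          |u (x, t)| ≤ Ci * (1 + ‖x‖ ^ d + |t| ^ (d / 2))) : G d u := by
  obtain ⟨C, h⟩ := h
  refine ⟨|C| * 3, by positivity, ?_⟩
  have hc : ∀ (x : EuclideanSpace ℝ (Fin n)) (t : ℝ), t ≤ 0 →
          |u (x, t)| ≤ |C| * (1 + ‖x‖ ^ d + |t| ^ (d / 2)) := by
    intro x t ht
    have hcl : t ∈ closure (Set.Iio (0:ℝ)) := by rw [closure_Iio]; exact ht
    have hu' := hu.continuous
    have hcont : Continuous fun t : ℝ => |C| * (1 + ‖x‖ ^ d + |t| ^ (d / 2)) := by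
      have := (continuous_abs (G := ℝ)).rpow_const (p := d / 2) (fun _ => Or.inr (by linarith))
      fun_prop
    refine closure_minimal (s := Set.Iio (0:ℝ)) (t := {t | |u (x, t)| ≤ |C| * (1 + ‖x‖ ^ d + |t| ^ (d / 2))})
      ?_ (isClosed_le (by fun_prop) hcont) hcl
    intro s hs
    refine (h x s hs).trans ?_
    exact mul_le_mul_of_nonneg_right (le_abs_self C) (by positivity)
  intro R hR p h1 h2 h3
  refine (hc p.1 p.2 h3).trans ?_
  rw [mul_assoc]
  apply mul_le_mul_of_nonneg_left _ (abs_nonneg C)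
  have a1 : 1 ≤ R ^ d := Real.one_le_rpow hR (by linarith)
  have a2 : ‖p.1‖ ^ d ≤ R ^ d := Real.rpow_le_rpow (norm_nonneg _) h1 (by linarith)
  have a3 : |p.2| ^ (d/2) ≤ R ^ d := by
    calc |p.2| ^ (d/2) ≤ (R^2) ^ (d/2) := 
          Real.rpow_le_rpow (abs_nonneg _) (by rw [abs_le]; constructor <;> nlinarith) (by linarith)
      _ = R ^ d := by
        rw [← Real.rpow_natCast R 2, ← Real.rpow_mul (by linarith)]
        congr 1; push_cast; ring
  linarith

lemma G_lin {ℓ : ℕ} {a : ℝ} {u : Fin ℓ → V n → ℝ} (h : ∀ i, G a (u i)) (c : Fin ℓ → ℝ) :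
    G a (∑ i, c i • u i) := by
  choose C hC h using h
  refine ⟨∑ i, |c i| * C i, Finset.sum_nonneg fun i _ => mul_nonneg (abs_nonneg _) (hC i), ?_⟩
  intro R hR p h1 h2 h3
  simp only [Finset.sum_apply, Pi.smul_apply, smul_eq_mul]
  refine (Finset.abs_sum_le_sum_abs _ _).trans ?_
  rw [Finset.sum_mul]
  refine Finset.sum_le_sum fun i _ => ?_
  rw [abs_mul, mul_assoc]
  exact mul_le_mul_of_nonneg_left (h i R hR p h1 h2 h3) (abs_nonneg _)

lemma Cal_lin {ℓ : ℕ} {u : Fin ℓ → V n → ℝ} (hu : ∀ i, Sm (u i)) (h : ∀ i, Cal (u i)) (c : Fin ℓ → ℝ) :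
    Cal (∑ i, c i • u i) := by
  intro p hp
  have : L (∑ i, c i • u i) = ∑ i, c i • L (u i) := by
    unfold L
    simp_rw [D_sum _ (fun i => (hu i).const_smul (c i)), D_smul (hu _),
      D_sum _ (fun i => ((hu i).D _).const_smul (c i)), D_smul ((hu _).D _), smul_sub,
      Finset.sum_sub_distrib, Finset.smul_sum]
    rw [Finset.sum_comm]
  rw [this]
  simp [h _ p hp]

open Classical in
noncomputable def word {m : ℕ} (α : Fin n → Fin (m + 1)) : List (Fin n) :=
  if h : ∃ w : List (Fin n), ∀ i, w.count i = (α i : ℕ) then h.choose else []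

lemma word_spec {m : ℕ} (w : List (Fin n)) (hw : w.length ≤ m) :
    ∃ α : Fin n → Fin (m + 1), w.Perm (word α) := by
  refine ⟨fun i => ⟨w.count i, by have := List.count_le_length (a := i) (l := w); omega⟩, ?_⟩
  have h : ∃ w' : List (Fin n), ∀ i, w'.count i =
      (((fun i => ⟨w.count i, by have := List.count_le_length (a := i) (l := w); omega⟩ :
        Fin n → Fin (m+1)) i : ℕ)) := ⟨w, fun i => rfl⟩
  rw [List.perm_iff_count]
  intro i
  rw [word, dif_pos h]
  exact (h.choose_spec i).symm

end HeatAux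

open HeatAux

/-- There is a constant `C = C_n` depending only on `n` so that for every `d ≥ 1`,
any linearly independent family `u_1, …, u_ℓ` of smooth caloric functions on
`ℝⁿ × (−∞,0)` with polynomial growth of degree `d` satisfies `ℓ ≤ C_n d^n`. -/
theorem dim_Pd_bound_euclidean (n : ℕ) :
    ∃ C : ℝ, 0 < C ∧ ∀ d : ℝ, 1 ≤ d →
      ∀ (ℓ : ℕ) (u : Fin ℓ → (EuclideanSpace ℝ (Fin n) × ℝ → ℝ)),
        (∀ i, ContDiff ℝ (⊤ : ℕ∞) (u i)) →
        (∀ i (x : EuclideanSpace ℝ (Fin n)) (t : ℝ), t < 0 →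
          deriv (fun s => u i (x, s)) t = lap (fun y => u i (y, t)) x) →
        (∀ i, ∃ Ci : ℝ, ∀ (x : EuclideanSpace ℝ (Fin n)) (t : ℝ), t < 0 →
          |u i (x, t)| ≤ Ci * (1 + ‖x‖ ^ d + |t| ^ (d / 2))) →
        LinearIndependent ℝ
          (fun i => ({p : EuclideanSpace ℝ (Fin n) × ℝ | p.2 < 0}).restrict (u i)) →
        (ℓ : ℝ) ≤ C * d ^ n := by
  refine ⟨2 ^ n, by positivity, ?_⟩
  intro d hd ℓ u hu hcal hgr hli
  have hc : ∀ i, Cal (u i) := fun i => eq_zero_of_neg (sm_L (hu i)) fun p hp => by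
    have := hcal i p.1 p.2 hp
    have h2 := L_eq (hu i) p.1 p.2
    rw [this, sub_self] at h2
    exact h2
  have hg : ∀ i, G d (u i) := fun i => G_of hd (hu i) (hgr i)
  set m := ⌊d⌋₊ with hm
  let Φ : (Fin ℓ → ℝ) →ₗ[ℝ] ((Fin n → Fin (m + 1)) → ℝ) :=
    { toFun := fun c α => ∑ i, c i * W (word α) (u i) 0
      map_add' := fun a b => by
        funext α; simp [add_mul, Finset.sum_add_distrib]
      map_smul' := fun a b => by
        funext α; simp [mul_assoc, Finset.mul_sum] }
  have hinj : Function.Injective Φ := by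
    rw [← LinearMap.ker_eq_bot, LinearMap.ker_eq_bot']
    intro c hΦ
    have hs : Sm (∑ i, c i • u i) := Sm.sum _ fun i => Sm.const_smul (hu i) (c i)
    have hv := vanish hs (Cal_lin hu hc c) (G_lin hg c) m (Nat.lt_floor_add_one d) (by
      intro w hw
      obtain ⟨α, hα⟩ := word_spec w hw
      rw [W_perm hs hα, W_lin hu]
      have := congrFun hΦ α
      simpa [Φ] using this)
    rw [Fintype.linearIndependent_iff] at hli
    funext i
    refine hli c ?_ i
    funext p
    have := hv p.1 (le_of_lt p.2)
    simpa [Set.restrict] using this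
  have hcard := LinearMap.finrank_le_finrank_of_injective hinj
  simp only [Module.finrank_fintype_fun_eq_card, Fintype.card_fin, Fintype.card_fun] at hcard
  have h1 : (m : ℝ) ≤ d := Nat.floor_le (by linarith)
  calc (ℓ : ℝ) ≤ ((m + 1) ^ n : ℕ) := by exact_mod_cast hcard
    _ = ((m : ℝ) + 1) ^ n := by push_cast; rfl
    _ ≤ (2 * d) ^ n := by gcongr; linarith
    _ = 2 ^ n * d ^ n := mul_pow _ _ _
end

section
/- Fix t < 0. If u : ℝⁿ → ℝ is C¹ with ∫_{ℝⁿ} (1 + ‖x‖²) u(x)² e^{‖x‖²/(4t)} dx < ∞ and ∫_{ℝⁿ} ‖∇u‖² e^{‖x‖²/(4t)} dx < ∞, then (1/(−t)) · ∫_{ℝⁿ} ‖x‖² u² e^{‖x‖²/(4t)} dx ≤ 4n · ∫_{ℝⁿ} u² e^{‖x‖²/(4t)} dx − 16t · ∫_{ℝⁿ} ‖∇u‖² e^{‖x‖²/(4t)} dx. (Euclidean-space case of the paper's Lemma 4.4, the localization inequality on an ancient mean curvature flow; for the static flow M_t = ℝⁿ the quantity φ = H + x^⊥/(2t) vanishes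 identically.) -/
open MeasureTheory Real

lemma localization_coord (n : ℕ) (t : ℝ) (ht : t < 0)
    (u : EuclideanSpace ℝ (Fin n) → ℝ) (hu : ContDiff ℝ 1 u)
    (h1 : Integrable (fun x => (1 + ‖x‖ ^ 2) * (u x) ^ 2 * exp (‖x‖ ^ 2 / (4 * t))))
    (h2 : Integrable (fun x => ‖gradient u x‖ ^ 2 * exp (‖x‖ ^ 2 / (4 * t)))) (i : Fin n) :
    Integrable (fun x => (x i) ^ 2 * (u x) ^ 2 * exp (‖x‖ ^ 2 / (4 * t))) ∧
    Integrable (fun x => (gradient u x i) ^ 2 * exp (‖x‖ ^ 2 / (4 * t))) ∧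
    Integrable (fun x => (u x) ^ 2 * exp (‖x‖ ^ 2 / (4 * t))) ∧
    (1 / (-t)) * ∫ x, (x i) ^ 2 * (u x) ^ 2 * exp (‖x‖ ^ 2 / (4 * t)) ≤
      4 * (∫ x, (u x) ^ 2 * exp (‖x‖ ^ 2 / (4 * t))) -
        16 * t * ∫ x, (gradient u x i) ^ 2 * exp (‖x‖ ^ 2 / (4 * t)) := by
  have cu : Continuous u := hu.continuous
  have cg : Continuous (gradient u) := by
    unfold gradient
    exact (LinearIsometryEquiv.continuous _).comp (hu.continuous_fderiv (by norm_num))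
  have ci : Continuous (fun x : EuclideanSpace ℝ (Fin n) => x i) := by fun_prop
  have cgi : Continuous (fun x => gradient u x i) := ci.comp cg
  have cw : Continuous (fun x : EuclideanSpace ℝ (Fin n) => exp (‖x‖ ^ 2 / (4 * t))) := by
    fun_prop
  have hle : ∀ x : EuclideanSpace ℝ (Fin n), (x i) ^ 2 ≤ ‖x‖ ^ 2 := fun x => by
    have := PiLp.norm_apply_le x i
    rw [← sq_abs (x i), ← Real.norm_eq_abs]
    gcongr
  have I1 : Integrable (fun x => (x i) ^ 2 * (u x) ^ 2 * exp (‖x‖ ^ 2 / (4 * t))) := by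
    refine h1.mono' (by fun_prop) (.of_forall fun x => ?_)
    rw [Real.norm_of_nonneg (by positivity)]
    have := hle x
    gcongr
    linarith
  have I2 : Integrable (fun x => (gradient u x i) ^ 2 * exp (‖x‖ ^ 2 / (4 * t))) := by
    refine h2.mono' (by fun_prop) (.of_forall fun x => ?_)
    rw [Real.norm_of_nonneg (by positivity)]
    have := hle (gradient u x)
    gcongr
  have I3 : Integrable (fun x => (u x) ^ 2 * exp (‖x‖ ^ 2 / (4 * t))) := by
    refine h1.mono' (by fun_prop) (.of_forall fun x => ?_)
    rw [Real.norm_of_nonneg (by positivity)]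
    gcongr
    nlinarith [sq_nonneg ‖x‖, sq_nonneg (u x), mul_nonneg (sq_nonneg ‖x‖) (sq_nonneg (u x))]
  have I4 : Integrable (fun x => x i * (u x) ^ 2 * exp (‖x‖ ^ 2 / (4 * t))) := by
    refine (I1.add I3).mono' (by fun_prop) (.of_forall fun x => ?_)
    simp only [Pi.add_apply]
    rw [norm_mul, norm_mul, Real.norm_of_nonneg (exp_nonneg _),
      Real.norm_of_nonneg (sq_nonneg (u x)), ← add_mul]
    gcongr
    rw [← sq_abs (x i), Real.norm_eq_abs]
    nlinarith [sq_nonneg (u x), mul_nonneg (sq_nonneg (|x i| - 1)) (sq_nonneg (u x)),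
      mul_nonneg (sq_nonneg (|x i|)) (sq_nonneg (u x))]
  have I5 : Integrable (fun x => (2 * x i * u x * gradient u x i) *
      exp (‖x‖ ^ 2 / (4 * t))) := by
    refine (I1.add I2).mono' (by fun_prop) (.of_forall fun x => ?_)
    simp only [Pi.add_apply]
    rw [norm_mul, Real.norm_of_nonneg (exp_nonneg _), ← add_mul]
    gcongr
    rw [Real.norm_eq_abs, abs_le]
    constructor <;> nlinarith [sq_nonneg (x i * u x - gradient u x i),
      sq_nonneg (x i * u x + gradient u x i)]
  have dgi : ∀ x, fderiv ℝ u x (EuclideanSpace.single i 1) = gradient u x i := fun x => by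
    have : inner ℝ (gradient u x) (EuclideanSpace.single i (1:ℝ))
        = fderiv ℝ u x (EuclideanSpace.single i 1) := by
      simp only [gradient, InnerProductSpace.toDual_symm_apply]
    rw [← this, EuclideanSpace.inner_single_right]; simp
  have key := integral_bilinear_hasLineDerivAt_right_eq_neg_left_of_integrable
    (μ := (volume : Measure (EuclideanSpace ℝ (Fin n))))
    (B := ContinuousLinearMap.mul ℝ ℝ) (v := EuclideanSpace.single i (1:ℝ))
    (f := fun x => x i * (u x) ^ 2)
    (f' := fun x => (u x) ^ 2 + 2 * x i * u x * gradient u x i)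
    (g := fun x => exp (‖x‖ ^ 2 / (4 * t)))
    (g' := fun x => x i / (2 * t) * exp (‖x‖ ^ 2 / (4 * t)))
    (by
      refine (I3.add I5).congr (.of_forall fun x => ?_)
      simp [add_mul])
    (by
      refine (I1.const_mul (1 / (2 * t))).congr (.of_forall fun x => ?_)
      simp only [ContinuousLinearMap.mul_apply']
      ring)
    (by simpa using I4)
    (by
      intro x _
      have a1 : HasFDerivAt (fun x : EuclideanSpace ℝ (Fin n) => x i)
        (EuclideanSpace.proj i : EuclideanSpace ℝ (Fin n) →L[ℝ] ℝ) x :=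
        (EuclideanSpace.proj i : EuclideanSpace ℝ (Fin n) →L[ℝ] ℝ).hasFDerivAt
      have a2 := (hu.differentiable (by norm_num) x).hasFDerivAt
      have h := (a1.mul (a2.pow 2)).hasLineDerivAt (EuclideanSpace.single i (1:ℝ))
      have e : (u x) ^ 2 + 2 * x i * u x * gradient u x i =
        x i * ((2 • u x ^ (2 - 1)) * fderiv ℝ u x (EuclideanSpace.single i 1)) +
        u x ^ 2 * (EuclideanSpace.single i (1:ℝ) : EuclideanSpace ℝ (Fin n)) i := by
        rw [dgi]
        simp
        ring
      simp only [e]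
      exact h)
    (by
      intro x _
      have a1 := (hasStrictFDerivAt_norm_sq x).hasFDerivAt
      have := ((a1.mul_const (1 / (4 * t))).exp).hasLineDerivAt (EuclideanSpace.single i (1:ℝ))
      simp only [mul_one_div] at this
      convert this using 1
      simp [EuclideanSpace.inner_single_right]
      field_simp
      try ring)
  simp only [ContinuousLinearMap.mul_apply'] at key
  have e1 : ∫ x : EuclideanSpace ℝ (Fin n), x i * u x ^ 2 * (x i / (2 * t) *
      exp (‖x‖ ^ 2 / (4 * t))) =
      (1 / (2 * t)) * ∫ x, (x i) ^ 2 * (u x) ^ 2 * exp (‖x‖ ^ 2 / (4 * t)) := by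
    rw [← integral_const_mul]
    congr 1; ext x; ring
  have e2 : ∫ x, ((u x) ^ 2 + 2 * x i * u x * gradient u x i) * exp (‖x‖ ^ 2 / (4 * t)) =
      (∫ x, (u x) ^ 2 * exp (‖x‖ ^ 2 / (4 * t))) +
      ∫ x, (2 * x i * u x * gradient u x i) * exp (‖x‖ ^ 2 / (4 * t)) := by
    rw [← integral_add I3 I5]
    congr 1; ext x; ring
  have e3 : ∫ x, (2 * x i * u x * gradient u x i) * exp (‖x‖ ^ 2 / (4 * t)) ≤
      (1 / (-4 * t)) * (∫ x, (x i) ^ 2 * (u x) ^ 2 * exp (‖x‖ ^ 2 / (4 * t))) +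
      (-4 * t) * ∫ x, (gradient u x i) ^ 2 * exp (‖x‖ ^ 2 / (4 * t)) := by
    rw [← integral_const_mul, ← integral_const_mul,
      ← integral_add (I1.const_mul _) (I2.const_mul _)]
    refine integral_mono I5 ((I1.const_mul _).add (I2.const_mul _)) fun x => ?_
    simp only [Pi.add_apply]
    rw [← mul_assoc, ← mul_assoc (-4 * t), ← add_mul]
    gcongr
    have hs : 0 < -4 * t := by linarith
    have : (1 / (-4 * t)) * ((x i) ^ 2 * u x ^ 2) + -4 * t * gradient u x i ^ 2
      - 2 * x i * u x * gradient u x i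
      = (1 / (-4 * t)) * (x i * u x - (-4 * t) * gradient u x i) ^ 2 := by
      have := hs.ne'
      have := ht.ne
      field_simp
      ring
    have h : 0 ≤ (1 / (-4 * t)) * (x i * u x - (-4 * t) * gradient u x i) ^ 2 := by
      have : 0 < 1 / (-4 * t) := by positivity
      positivity
    linarith
  refine ⟨I1, I2, I3, ?_⟩
  rw [e1, e2] at key
  generalize (∫ x, (x i) ^ 2 * (u x) ^ 2 * exp (‖x‖ ^ 2 / (4 * t))) = A at *
  have q1 : 1 / (2 * t) * A = -2 * (1 / (-4 * t) * A) := by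
    have := ht.ne
    field_simp
    try ring
  have q2 : 1 / (-t) * A = 4 * (1 / (-4 * t) * A) := by
    have := ht.ne
    field_simp
    try ring
  rw [q1] at key
  rw [q2]
  linarith

/-- Euclidean-space case of the localization inequality on an ancient mean curvature flow
(for the static flow `M_t = ℝⁿ`, where `φ ≡ 0`): for fixed `t < 0`,
`(1/(−t)) ∫‖x‖²u² e^{‖x‖²/4t} ≤ 4n ∫u² e^{‖x‖²/4t} − 16t ∫‖∇u‖² e^{‖x‖²/4t}`. -/
theorem localization_ancient_flow_euclidean (n : ℕ) (hn : 1 ≤ n) (t : ℝ) (ht : t < 0)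
    (u : EuclideanSpace ℝ (Fin n) → ℝ) (hu : ContDiff ℝ 1 u)
    (h1 : Integrable (fun x => (1 + ‖x‖ ^ 2) * (u x) ^ 2 * exp (‖x‖ ^ 2 / (4 * t))))
    (h2 : Integrable (fun x => ‖gradient u x‖ ^ 2 * exp (‖x‖ ^ 2 / (4 * t)))) :
    (1 / (-t)) * ∫ x, ‖x‖ ^ 2 * (u x) ^ 2 * exp (‖x‖ ^ 2 / (4 * t)) ≤
      4 * n * (∫ x, (u x) ^ 2 * exp (‖x‖ ^ 2 / (4 * t))) -
        16 * t * ∫ x, ‖gradient u x‖ ^ 2 * exp (‖x‖ ^ 2 / (4 * t)) := by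
  have H := localization_coord n t ht u hu h1 h2
  have e1 : ∫ x, ‖x‖ ^ 2 * (u x) ^ 2 * exp (‖x‖ ^ 2 / (4 * t)) =
      ∑ i, ∫ x, (x i) ^ 2 * (u x) ^ 2 * exp (‖x‖ ^ 2 / (4 * t)) := by
    rw [← integral_finsetSum _ fun i _ => (H i).1]
    congr 1; ext x
    rw [← Finset.sum_mul, ← Finset.sum_mul, ← EuclideanSpace.real_norm_sq_eq]
  have e2 : ∫ x, ‖gradient u x‖ ^ 2 * exp (‖x‖ ^ 2 / (4 * t)) =
      ∑ i, ∫ x, (gradient u x i) ^ 2 * exp (‖x‖ ^ 2 / (4 * t)) := by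
    rw [← integral_finsetSum _ fun i _ => (H i).2.1]
    congr 1; ext x
    rw [← Finset.sum_mul, ← EuclideanSpace.real_norm_sq_eq]
  rw [e1, e2, Finset.mul_sum, Finset.mul_sum]
  refine (Finset.sum_le_sum fun i _ => (H i).2.2.2).trans ?_
  rw [Finset.sum_sub_distrib]
  simp
  linarith
end

section
/- Let u : ℝⁿ × (−∞,0) → ℝ be smooth and caloric (∂_t u = Δ_x u pointwise), and suppose there exist constants C and d ≥ 1 such that |u(x,t)| + ‖∇_x u(x,t)‖ + ‖∇_x² u(x,t)‖ ≤ C(1 + ‖x‖^d + |t|^{d/2}) for all x and t < 0. Then I_u is differentiable on (−∞,0) with I_u′(t) = −2(−4πt)^{−n/2} ∫_{ℝⁿ} ‖∇_x u(x,t)‖² e^{‖x‖²/(4t)} dx ≤ 0; in particular I_u is nonincreasing on (−∞,0). (Euclidean-space case of the derivative formula in the paper's Lemma 7.1, where φ = H + x^⊥/(2t) vanishes identically.) -/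
open MeasureTheory Real

/-- Polynomial growth. -/
def PB {E : Type*} [NormedAddCommGroup E] (f : E → ℝ) : Prop :=
  ∃ (K : ℝ) (N : ℕ), 0 ≤ K ∧ ∀ x, |f x| ≤ K * (1 + ‖x‖) ^ N

section pb
variable {E : Type*} [NormedAddCommGroup E]

lemma PB.mono {f g : E → ℝ} (hg : PB g) (h : ∀ x, |f x| ≤ |g x|) : PB f := by
  obtain ⟨K, N, hK, hb⟩ := hg
  exact ⟨K, N, hK, fun x => (h x).trans (hb x)⟩

lemma PB.const (c : ℝ) : PB (fun _ : E => c) := ⟨|c|, 0, abs_nonneg c, fun x => by simp⟩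

lemma PB.norm : PB (fun x : E => ‖x‖) :=
  ⟨1, 1, zero_le_one, fun x => by rw [abs_of_nonneg (norm_nonneg x)]; linarith⟩

lemma PB.mul {f g : E → ℝ} (hf : PB f) (hg : PB g) : PB (fun x => f x * g x) := by
  obtain ⟨K, N, hK, hb⟩ := hf
  obtain ⟨L, M, hL, hc⟩ := hg
  refine ⟨K * L, N + M, by positivity, fun x => ?_⟩
  rw [abs_mul]
  calc |f x| * |g x| ≤ (K * (1 + ‖x‖) ^ N) * (L * (1 + ‖x‖) ^ M) :=
        mul_le_mul (hb x) (hc x) (abs_nonneg _) (by positivity)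
    _ = _ := by ring

lemma PB.add {f g : E → ℝ} (hf : PB f) (hg : PB g) : PB (fun x => f x + g x) := by
  obtain ⟨K, N, hK, hb⟩ := hf
  obtain ⟨L, M, hL, hc⟩ := hg
  refine ⟨K + L, N + M, by positivity, fun x => ?_⟩
  have h1 : 1 ≤ 1 + ‖x‖ := by linarith [norm_nonneg x]
  have hN : (1 + ‖x‖) ^ N ≤ (1 + ‖x‖) ^ (N + M) := pow_le_pow_right₀ h1 (by omega)
  have hM : (1 + ‖x‖) ^ M ≤ (1 + ‖x‖) ^ (N + M) := pow_le_pow_right₀ h1 (by omega)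
  calc |f x + g x| ≤ |f x| + |g x| := abs_add_le _ _
    _ ≤ K * (1 + ‖x‖) ^ N + L * (1 + ‖x‖) ^ M := add_le_add (hb x) (hc x)
    _ ≤ K * (1 + ‖x‖) ^ (N + M) + L * (1 + ‖x‖) ^ (N + M) := by gcongr
    _ = _ := by ring

lemma PB.pow {f : E → ℝ} (hf : PB f) (k : ℕ) : PB (fun x => f x ^ k) := by
  induction k with
  | zero => simpa using PB.const (E := E) 1
  | succ k ih => simpa only [pow_succ] using ih.mul hf

lemma PB.neg {f : E → ℝ} (hf : PB f) : PB (fun x => - f x) := hf.mono fun x => by simp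

lemma PB.sub {f g : E → ℝ} (hf : PB f) (hg : PB g) : PB (fun x => f x - g x) := by
  simpa only [sub_eq_add_neg] using hf.add hg.neg

lemma PB.sum {ι : Type*} (s : Finset ι) {f : ι → E → ℝ} (hf : ∀ i, PB (f i)) :
    PB (fun x => ∑ i ∈ s, f i x) := by
  classical
  induction s using Finset.induction_on with
  | empty => simpa using PB.const (E := E) 0
  | insert a s ha ih => simpa only [Finset.sum_insert ha] using (hf a).add ih

end pb

lemma gauss_integrable {n : ℕ} {a : ℝ} (ha : 0 < a) :
    Integrable (fun x : EuclideanSpace ℝ (Fin n) => exp (-a * ‖x‖ ^ 2)) := by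
  have h := (GaussianFourier.integrable_cexp_neg_mul_sq_norm_add
    (V := EuclideanSpace ℝ (Fin n)) (b := (a : ℂ)) (by simpa using ha) 0 0).norm
  refine h.congr (Filter.Eventually.of_forall fun x => ?_)
  simp only [Complex.norm_exp]
  congr 1
  simp [← Complex.ofReal_pow]

lemma pb_integrable {n : ℕ} {f : EuclideanSpace ℝ (Fin n) → ℝ} (hf : Continuous f)
    (hb : PB f) {t : ℝ} (ht : t < 0) :
    Integrable (fun x => f x * exp (‖x‖ ^ 2 / (4 * t))) := by
  obtain ⟨K, N, hK, hb⟩ := hb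
  obtain ⟨a, ha, hat⟩ : ∃ a : ℝ, 0 < a ∧ ∀ r : ℝ, r / (4 * t) = -(2 * a) * r := by
    refine ⟨-1 / (8 * t), div_pos_of_neg_of_neg (by norm_num) (by linarith), fun r => ?_⟩
    field_simp
    ring
  refine ((gauss_integrable (n := n) ha).const_mul
    (K * (N.factorial * exp (1 + 1 / (4 * a))))).mono' ?_ (Filter.Eventually.of_forall fun x => ?_)
  · have h4 : Continuous fun x : EuclideanSpace ℝ (Fin n) => ‖x‖ ^ 2 / (4 * t) :=
      (continuous_norm.pow 2).div_const _
    exact (hf.mul (Real.continuous_exp.comp h4)).aestronglyMeasurable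
  · rw [norm_mul, Real.norm_eq_abs, Real.norm_eq_abs, abs_of_pos (exp_pos _), hat]
    set r := ‖x‖ with hr
    have hr0 : 0 ≤ r := norm_nonneg x
    have h1 : (1 + r) ^ N ≤ N.factorial * exp (1 + r) := by
      have := Real.pow_div_factorial_le_exp (1 + r) (by linarith) N
      rw [div_le_iff₀ (by positivity)] at this
      linarith
    have h2 : r ≤ 1 / (4 * a) + a * r ^ 2 := by
      have : 1 / (4 * a) + a * r ^ 2 - r = (2 * a * r - 1) ^ 2 / (4 * a) := by
        field_simp
        ring
      have : 0 ≤ (2 * a * r - 1) ^ 2 / (4 * a) := by positivity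
      linarith
    calc |f x| * exp (-(2 * a) * r ^ 2)
        ≤ (K * (N.factorial * exp (1 + r))) * exp (-(2 * a) * r ^ 2) := by
          gcongr
          exact (hb x).trans (by gcongr)
      _ = (K * N.factorial) * exp (1 + r + -(2 * a) * r ^ 2) := by
          rw [exp_add (1 + r)]; ring
      _ ≤ (K * N.factorial) * exp (1 + 1 / (4 * a) + -a * r ^ 2) := by
          refine mul_le_mul_of_nonneg_left (exp_le_exp.2 ?_) (by positivity)
          linarith
      _ = _ := by rw [exp_add (1 + 1 / (4 * a))]; ring

lemma norm_sq_clm {n : ℕ} (L : EuclideanSpace ℝ (Fin n) →L[ℝ] ℝ) :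
    ‖L‖ ^ 2 = ∑ i, (L (EuclideanSpace.single i 1)) ^ 2 := by
  set w := (InnerProductSpace.toDual ℝ (EuclideanSpace ℝ (Fin n))).symm L with hw
  have h1 : ‖L‖ = ‖w‖ := by simp [hw]
  rw [h1, EuclideanSpace.real_norm_sq_eq]
  refine Finset.sum_congr rfl fun i _ => ?_
  have h2 : inner ℝ w (EuclideanSpace.single i (1 : ℝ)) = L (EuclideanSpace.single i 1) :=
    InnerProductSpace.toDual_symm_apply
  rw [← h2, EuclideanSpace.inner_single_right]
  simp

lemma one_add_one_le_top : (1 : WithTop ℕ∞) + 1 ≤ ((⊤ : ℕ∞) : WithTop ℕ∞) := by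
  have h : (((1 + 1 : ℕ∞)) : WithTop ℕ∞) ≤ ((⊤ : ℕ∞) : WithTop ℕ∞) := WithTop.coe_le_coe.2 le_top
  exact h

lemma d2_bound {n : ℕ} {v : EuclideanSpace ℝ (Fin n) → ℝ} (hv : ContDiff ℝ (⊤ : ℕ∞) v)
    (x : EuclideanSpace ℝ (Fin n)) (i : Fin n) :
    |fderiv ℝ (fun y => fderiv ℝ v y (EuclideanSpace.single i 1)) x (EuclideanSpace.single i 1)|
      ≤ ‖iteratedFDeriv ℝ 2 v x‖ := by
  have hd : DifferentiableAt ℝ (fderiv ℝ v) x :=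
    ((hv.fderiv_right (m := 1) one_add_one_le_top).differentiable (by norm_num)) x
  have h1 : fderiv ℝ (fun y => fderiv ℝ v y (EuclideanSpace.single i 1)) x
      (EuclideanSpace.single i 1) =
      iteratedFDeriv ℝ 2 v x ![EuclideanSpace.single i 1, EuclideanSpace.single i 1] := by
    rw [iteratedFDeriv_two_apply, fderiv_clm_apply hd (by fun_prop)]
    simp
  rw [h1, ← Real.norm_eq_abs]
  refine (ContinuousMultilinearMap.le_opNorm _ _).trans ?_
  simp [Fin.prod_univ_two]

lemma d1_bound {n : ℕ} (L : EuclideanSpace ℝ (Fin n) →L[ℝ] ℝ) (i : Fin n) :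
    |L (EuclideanSpace.single i 1)| ≤ ‖L‖ := by
  refine (L.le_opNorm _).trans ?_
  simp

lemma cont_d1 {n : ℕ} {v : EuclideanSpace ℝ (Fin n) → ℝ} (hv : ContDiff ℝ (⊤ : ℕ∞) v)
    (i : Fin n) : ContDiff ℝ 1 (fun y => fderiv ℝ v y (EuclideanSpace.single i 1)) :=
  (hv.fderiv_right (m := 1) one_add_one_le_top).clm_apply contDiff_const

lemma cont_d2 {n : ℕ} {v : EuclideanSpace ℝ (Fin n) → ℝ} (hv : ContDiff ℝ (⊤ : ℕ∞) v)
    (i : Fin n) : Continuous (fun x => fderiv ℝ (fun y => fderiv ℝ v y (EuclideanSpace.single i 1)) x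
      (EuclideanSpace.single i 1)) :=
  ((cont_d1 hv i).continuous_fderiv (by norm_num)).clm_apply continuous_const

lemma integral_line_zero {n : ℕ} {f f' : EuclideanSpace ℝ (Fin n) → ℝ}
    {w : EuclideanSpace ℝ (Fin n)} (hf : Integrable f) (hf' : Integrable f')
    (h : ∀ x, HasLineDerivAt ℝ f (f' x) x w) : ∫ x, f' x = 0 := by
  have := integral_bilinear_hasLineDerivAt_right_eq_neg_left_of_integrable (μ := volume)
    (f := f) (f' := f') (g := fun _ => (1 : ℝ)) (g' := fun _ => (0 : ℝ)) (v := w)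
    (B := ContinuousLinearMap.mul ℝ ℝ) (by simpa using hf') (by simp) (by simpa using hf)
    (fun x _ => h x) (fun x _ => by simpa [HasLineDerivAt] using hasDerivAt_const _ _)
  simpa using this

lemma line_deriv {n : ℕ} {v : EuclideanSpace ℝ (Fin n) → ℝ} (hv : ContDiff ℝ (⊤ : ℕ∞) v)
    {t : ℝ} (ht : t < 0) (i : Fin n) (x : EuclideanSpace ℝ (Fin n)) :
    HasLineDerivAt ℝ (fun x => (2 * v x * fderiv ℝ v x (EuclideanSpace.single i 1)
        - v x ^ 2 * x i / (2 * t)) * exp (‖x‖ ^ 2 / (4 * t)))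
      ((2 * (fderiv ℝ v x (EuclideanSpace.single i 1)) ^ 2
        + 2 * v x * fderiv ℝ (fun y => fderiv ℝ v y (EuclideanSpace.single i 1)) x
            (EuclideanSpace.single i 1)
        - v x ^ 2 / (2 * t) - v x ^ 2 * x i ^ 2 / (4 * t ^ 2)) * exp (‖x‖ ^ 2 / (4 * t)))
      x (EuclideanSpace.single i 1) := by
  have h1 := (((hv.differentiable (by norm_num)) x).hasFDerivAt).hasLineDerivAt
    (EuclideanSpace.single i 1)
  have h2 := ((((cont_d1 hv i).differentiable (by norm_num)) x).hasFDerivAt).hasLineDerivAt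
    (EuclideanSpace.single i 1)
  have h3 : HasLineDerivAt ℝ (fun x : EuclideanSpace ℝ (Fin n) => x i) 1 x
      (EuclideanSpace.single i 1) := by
    have := ((EuclideanSpace.proj i : EuclideanSpace ℝ (Fin n) →L[ℝ] ℝ).hasFDerivAt
      (x := x)).hasLineDerivAt (EuclideanSpace.single i 1)
    simpa using this
  have h4 : HasLineDerivAt ℝ (fun x : EuclideanSpace ℝ (Fin n) => ‖x‖ ^ 2) (2 * x i) x
      (EuclideanSpace.single i 1) := by
    have := ((hasStrictFDerivAt_norm_sq x).hasFDerivAt).hasLineDerivAt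
      (EuclideanSpace.single i 1)
    simpa [EuclideanSpace.inner_single_right] using this
  unfold HasLineDerivAt at *
  have h5 := (((h1.const_mul 2).mul h2).sub (((h1.pow 2).mul h3).div_const (2 * t))).mul
    ((h4.div_const (4 * t)).exp)
  refine h5.congr_deriv ?_
  have : t ≠ 0 := ht.ne
  simp only [zero_smul, add_zero, Pi.mul_apply, Pi.pow_apply, Pi.sub_apply]
  field_simp
  ring

lemma spatial {n : ℕ} {v : EuclideanSpace ℝ (Fin n) → ℝ} (hv : ContDiff ℝ (⊤ : ℕ∞) v)
    (h0 : PB v) (h1 : PB fun x => ‖fderiv ℝ v x‖) (h2 : PB fun x => ‖iteratedFDeriv ℝ 2 v x‖)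
    {t : ℝ} (ht : t < 0) :
    (∫ x, (2 * v x * lap v x - v x ^ 2 * ‖x‖ ^ 2 / (4 * t ^ 2)) * exp (‖x‖ ^ 2 / (4 * t)))
      - n / (2 * t) * ∫ x, v x ^ 2 * exp (‖x‖ ^ 2 / (4 * t))
    = -2 * ∫ x, ‖fderiv ℝ v x‖ ^ 2 * exp (‖x‖ ^ 2 / (4 * t)) := by
  have c0 := hv.continuous
  have c1 := fun i => (cont_d1 hv i).continuous
  have c2 := fun i => cont_d2 hv i
  have p1 : ∀ i : Fin n, PB fun x => fderiv ℝ v x (EuclideanSpace.single i 1) := fun i =>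
    h1.mono fun x => by rw [abs_of_nonneg (norm_nonneg (fderiv ℝ v x))]; exact d1_bound _ _
  have p2 : ∀ i : Fin n, PB fun x => fderiv ℝ (fun y => fderiv ℝ v y (EuclideanSpace.single i 1)) x
            (EuclideanSpace.single i 1) := fun i =>
    h2.mono fun x => by
      rw [abs_of_nonneg (norm_nonneg (iteratedFDeriv ℝ 2 v x))]; exact d2_bound hv _ _
  have px : ∀ i : Fin n, PB fun x : EuclideanSpace ℝ (Fin n) => x i := fun i =>
    PB.norm.mono fun x => by
      rw [abs_of_nonneg (norm_nonneg x)]; exact PiLp.norm_apply_le x i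
  have cx : ∀ i : Fin n, Continuous fun x : EuclideanSpace ℝ (Fin n) => x i := fun i => by fun_prop
  have cl : Continuous (lap v) := by
    unfold lap
    exact continuous_finsetSum _ fun i _ => c2 i
  have pl : PB (lap v) := PB.sum _ p2
  have cf : Continuous fun x => fderiv ℝ v x := hv.continuous_fderiv (by norm_num)
  have key : ∀ i : Fin n, Integrable (fun x => ((2 * (fderiv ℝ v x (EuclideanSpace.single i 1)) ^ 2
        + 2 * v x * fderiv ℝ (fun y => fderiv ℝ v y (EuclideanSpace.single i 1)) x
            (EuclideanSpace.single i 1)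
        - v x ^ 2 / (2 * t) - v x ^ 2 * x i ^ 2 / (4 * t ^ 2)) * exp (‖x‖ ^ 2 / (4 * t)))) ∧ ∫ x, ((2 * (fderiv ℝ v x (EuclideanSpace.single i 1)) ^ 2
        + 2 * v x * fderiv ℝ (fun y => fderiv ℝ v y (EuclideanSpace.single i 1)) x
            (EuclideanSpace.single i 1)
        - v x ^ 2 / (2 * t) - v x ^ 2 * x i ^ 2 / (4 * t ^ 2)) * exp (‖x‖ ^ 2 / (4 * t))) = 0 := by
    intro i
    have hi : Integrable fun x => ((2 * (fderiv ℝ v x (EuclideanSpace.single i 1)) ^ 2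
        + 2 * v x * fderiv ℝ (fun y => fderiv ℝ v y (EuclideanSpace.single i 1)) x
            (EuclideanSpace.single i 1)
        - v x ^ 2 / (2 * t) - v x ^ 2 * x i ^ 2 / (4 * t ^ 2)) * exp (‖x‖ ^ 2 / (4 * t))) := by
      apply pb_integrable _ _ ht
      · have := c1 i; have := c2 i; have := cx i
        fun_prop
      · simp only [div_eq_mul_inv]
        exact (((((PB.const 2).mul ((p1 i).pow 2))).add (((PB.const 2).mul h0).mul (p2 i))).sub
          ((h0.pow 2).mul (PB.const _))).sub (((h0.pow 2).mul ((px i).pow 2)).mul (PB.const _))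
    refine ⟨hi, integral_line_zero ?_ hi (line_deriv hv ht i)⟩
    apply pb_integrable _ _ ht
    · have := c1 i; have := cx i
      fun_prop
    · simp only [div_eq_mul_inv]
      exact (((PB.const 2).mul h0).mul (p1 i)).sub (((h0.pow 2).mul (px i)).mul (PB.const _))
  have iA : Integrable fun x => (2 * v x * lap v x - v x ^ 2 * ‖x‖ ^ 2 / (4 * t ^ 2))
      * exp (‖x‖ ^ 2 / (4 * t)) := by
    apply pb_integrable (by fun_prop) _ ht
    simp only [div_eq_mul_inv]
    exact (((PB.const 2).mul h0).mul pl).sub (((h0.pow 2).mul (PB.norm.pow 2)).mul (PB.const _))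
  have iB : Integrable fun x => v x ^ 2 * exp (‖x‖ ^ 2 / (4 * t)) :=
    pb_integrable (by fun_prop) (h0.pow 2) ht
  have iC : Integrable fun x => ‖fderiv ℝ v x‖ ^ 2 * exp (‖x‖ ^ 2 / (4 * t)) :=
    pb_integrable (by fun_prop) (h1.pow 2) ht
  have hs := integral_finsetSum (μ := volume) Finset.univ (fun i _ => (key i).1)
  rw [Finset.sum_congr rfl (fun i _ => (key i).2), Finset.sum_const_zero] at hs
  rw [← sub_eq_zero, ← integral_const_mul, ← integral_const_mul, ← integral_sub iA (iB.const_mul _),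
    ← integral_sub (by exact iA.sub (iB.const_mul _)) (iC.const_mul _), ← hs]
  refine integral_congr_ae (Filter.Eventually.of_forall fun x => ?_)
  beta_reduce
  rw [← Finset.sum_mul, norm_sq_clm, EuclideanSpace.real_norm_sq_eq x]
  simp only [Finset.sum_sub_distrib, Finset.sum_add_distrib, ← Finset.mul_sum, ← Finset.sum_div,
    Finset.sum_const, Finset.card_univ, Fintype.card_fin, nsmul_eq_mul, lap]
  ring

lemma growth_unif {n : ℕ} (C d : ℝ) (hd : 1 ≤ d) {t : ℝ} :
    ∃ M : EuclideanSpace ℝ (Fin n) → ℝ, Continuous M ∧ PB M ∧ (∀ x, 0 ≤ M x) ∧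
      ∀ x s, 2 * t < s → s < 0 → C * (1 + ‖x‖ ^ d + |s| ^ (d / 2)) ≤ M x := by
  refine ⟨fun x => |C| * (2 + |2 * t| ^ (d / 2)) * (1 + ‖x‖) ^ ⌈d⌉₊, by fun_prop,
    ⟨|C| * (2 + |2 * t| ^ (d / 2)), ⌈d⌉₊, by positivity, fun x => ?_⟩, fun x => by positivity,
    fun x s hs hs0 => ?_⟩
  · rw [abs_of_nonneg (by positivity)]
  · have hx := norm_nonneg x
    have h1 : 1 ≤ (1 + ‖x‖) ^ ⌈d⌉₊ := one_le_pow₀ (by linarith)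
    have h2 : ‖x‖ ^ d ≤ (1 + ‖x‖) ^ ⌈d⌉₊ := by
      rw [← Real.rpow_natCast]
      exact (Real.rpow_le_rpow hx (by linarith) (by linarith)).trans
        (Real.rpow_le_rpow_of_exponent_le (by linarith) (Nat.le_ceil d))
    have h3 : |s| ^ (d / 2) ≤ |2 * t| ^ (d / 2) := by
      refine Real.rpow_le_rpow (abs_nonneg s) ?_ (by linarith)
      rw [abs_of_neg hs0, abs_of_neg (by linarith)]
      linarith
    have h4 : 0 ≤ |2 * t| ^ (d / 2) := by positivity
    have h5 : 1 + ‖x‖ ^ d + |s| ^ (d / 2) ≤ (2 + |2 * t| ^ (d / 2)) * (1 + ‖x‖) ^ ⌈d⌉₊ := by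
      nlinarith
    calc C * (1 + ‖x‖ ^ d + |s| ^ (d / 2)) ≤ |C| * (1 + ‖x‖ ^ d + |s| ^ (d / 2)) := by
          gcongr
          exact le_abs_self C
      _ ≤ |C| * ((2 + |2 * t| ^ (d / 2)) * (1 + ‖x‖) ^ ⌈d⌉₊) := by gcongr
      _ = _ := by ring

lemma main_deriv (n : ℕ)
    (u : EuclideanSpace ℝ (Fin n) × ℝ → ℝ) (hu : ContDiff ℝ (⊤ : ℕ∞) u)
    (hcal : ∀ (x : EuclideanSpace ℝ (Fin n)) (t : ℝ), t < 0 →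
      deriv (fun s => u (x, s)) t = lap (fun y => u (y, t)) x)
    (C d : ℝ) (hd : 1 ≤ d)
    (hgrowth : ∀ (x : EuclideanSpace ℝ (Fin n)) (t : ℝ), t < 0 →
      |u (x, t)| + ‖fderiv ℝ (fun y => u (y, t)) x‖ +
          ‖iteratedFDeriv ℝ 2 (fun y => u (y, t)) x‖ ≤
        C * (1 + ‖x‖ ^ d + |t| ^ (d / 2))) (t : ℝ) (ht : t < 0) :
      HasDerivAt
        (fun s : ℝ => (-4 * π * s) ^ (-(n : ℝ) / 2) *
          ∫ x, (u (x, s)) ^ 2 * exp (‖x‖ ^ 2 / (4 * s)))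
        (-2 * (-4 * π * t) ^ (-(n : ℝ) / 2) *
          ∫ x, ‖fderiv ℝ (fun y => u (y, t)) x‖ ^ 2 * exp (‖x‖ ^ 2 / (4 * t))) t := by
  obtain ⟨M, cM, pM, hM0, hM⟩ := growth_unif (n := n) C d hd (t := t)
  have hv : ∀ s, ContDiff ℝ (⊤ : ℕ∞) (fun y => u (y, s)) := fun s =>
    hu.comp (contDiff_id.prodMk contDiff_const)
  have b0 : ∀ x s, 2 * t < s → s < 0 → |u (x, s)| ≤ M x := fun x s h1 h2 => by
    have := hgrowth x s h2
    have := hM x s h1 h2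
    have := norm_nonneg (fderiv ℝ (fun y => u (y, s)) x)
    have := norm_nonneg (iteratedFDeriv ℝ 2 (fun y => u (y, s)) x)
    linarith
  have b1 : ∀ x s, 2 * t < s → s < 0 → ‖fderiv ℝ (fun y => u (y, s)) x‖ ≤ M x :=
    fun x s h1 h2 => by
    have := hgrowth x s h2
    have := hM x s h1 h2
    have := abs_nonneg (u (x, s))
    have := norm_nonneg (iteratedFDeriv ℝ 2 (fun y => u (y, s)) x)
    linarith
  have b2 : ∀ x s, 2 * t < s → s < 0 → ‖iteratedFDeriv ℝ 2 (fun y => u (y, s)) x‖ ≤ M x :=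
    fun x s h1 h2 => by
    have := hgrowth x s h2
    have := hM x s h1 h2
    have := abs_nonneg (u (x, s))
    have := norm_nonneg (fderiv ℝ (fun y => u (y, s)) x)
    linarith
  have bl : ∀ x s, 2 * t < s → s < 0 → |lap (fun y => u (y, s)) x| ≤ n * M x :=
    fun x s h1 h2 => by
    unfold lap
    refine (Finset.abs_sum_le_sum_abs _ _).trans ?_
    refine (Finset.sum_le_sum fun i _ => (d2_bound (hv s) x i).trans (b2 x s h1 h2)).trans ?_
    simp
  have ht2 : 2 * t < t := by linarith
  have hsp := spatial (hv t) (pM.mono fun x => (b0 x t ht2 ht).trans (le_abs_self _))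
    (pM.mono fun x => by
      rw [abs_of_nonneg (norm_nonneg _)]; exact (b1 x t ht2 ht).trans (le_abs_self _))
    (pM.mono fun x => by
      rw [abs_of_nonneg (norm_nonneg _)]; exact (b2 x t ht2 ht).trans (le_abs_self _)) ht
  have cl : Continuous (lap (fun y => u (y, t))) := by
    unfold lap
    exact continuous_finsetSum _ fun i _ => cont_d2 (hv t) i
  have cu : ∀ s, Continuous fun x => u (x, s) := fun s => (hv s).continuous
  have hJ := (hasDerivAt_integral_of_dominated_loc_of_deriv_le (μ := volume)
    (F := fun s x => (u (x, s)) ^ 2 * exp (‖x‖ ^ 2 / (4 * s)))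
    (F' := fun s x => (2 * u (x, s) * lap (fun y => u (y, s)) x
      - u (x, s) ^ 2 * ‖x‖ ^ 2 / (4 * s ^ 2)) * exp (‖x‖ ^ 2 / (4 * s)))
    (bound := fun x => (2 * M x * (n * M x) + M x ^ 2 * ‖x‖ ^ 2 / t ^ 2)
      * exp (‖x‖ ^ 2 / (4 * (2 * t))))
    (s := Set.Ioo (2 * t) (t / 2)) (x₀ := t)
    (Ioo_mem_nhds ht2 (by linarith)) ?_ ?_ ?_ ?_ ?_ ?_).2
  · have hc : HasDerivAt (fun s : ℝ => (-4 * π * s) ^ (-(n : ℝ) / 2))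
        (-(n / (2 * t)) * (-4 * π * t) ^ (-(n : ℝ) / 2)) t := by
      have hpos : 0 < -4 * π * t := by nlinarith [pi_pos]
      have h := ((hasDerivAt_id t).const_mul (-4 * π)).rpow_const (p := -(n : ℝ) / 2)
        (Or.inl (by simpa using hpos.ne'))
      refine h.congr_deriv ?_
      simp only [id, mul_one]
      rw [Real.rpow_sub_one hpos.ne']
      have := ht.ne
      have := pi_pos.ne'
      field_simp
    refine (hc.mul hJ).congr_deriv ?_
    linear_combination (-4 * π * t) ^ (-(n : ℝ) / 2) * hsp
  · refine Filter.Eventually.of_forall fun s => Continuous.aestronglyMeasurable ?_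
    have := cu s
    fun_prop
  · exact pb_integrable ((cu t).pow 2)
      ((pM.mono fun x => (b0 x t ht2 ht).trans (le_abs_self _)).pow 2) ht
  · refine Continuous.aestronglyMeasurable ?_
    have := cu t
    fun_prop
  · refine Filter.Eventually.of_forall fun x s hs => ?_
    have hs0 : s < 0 := by linarith [hs.2]
    rw [norm_mul, Real.norm_eq_abs, Real.norm_eq_abs, abs_of_pos (exp_pos _)]
    have h0 := b0 x s hs.1 hs0
    have hl := bl x s hs.1 hs0
    have hm := hM0 x
    have ht2 : 0 < t ^ 2 := sq_pos_of_neg ht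
    have hst : t ^ 2 ≤ 4 * s ^ 2 := by nlinarith [hs.2]
    have e1 : |2 * u (x, s) * lap (fun y => u (y, s)) x| ≤ 2 * M x * (n * M x) := by
      rw [abs_mul, abs_mul, abs_two]
      gcongr
    have e2 : |u (x, s) ^ 2 * ‖x‖ ^ 2 / (4 * s ^ 2)| ≤ M x ^ 2 * ‖x‖ ^ 2 / t ^ 2 := by
      rw [abs_of_nonneg (by positivity), ← sq_abs (u (x, s))]
      gcongr
    refine mul_le_mul ((abs_sub _ _).trans (add_le_add e1 e2)) (exp_le_exp.2 ?_) (exp_pos _).le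
      (by positivity)
    rw [div_eq_mul_inv, div_eq_mul_inv]
    refine mul_le_mul_of_nonneg_left ?_ (by positivity)
    rw [inv_le_inv_of_neg (by linarith) (by linarith)]
    linarith [hs.1]
  · refine pb_integrable (by fun_prop) ?_ (by linarith)
    simp only [div_eq_mul_inv]
    exact (((PB.const 2).mul pM).mul ((PB.const _).mul pM)).add
      (((pM.pow 2).mul (PB.norm.pow 2)).mul (PB.const _))
  · refine Filter.Eventually.of_forall fun x s hs => ?_
    have hs0 : s < 0 := by linarith [hs.2]
    have hd1 : HasDerivAt (fun s => u (x, s)) (lap (fun y => u (y, s)) x) s := by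
      rw [← hcal x s hs0]
      have : ContDiff ℝ (⊤ : ℕ∞) fun s => u (x, s) := hu.comp (contDiff_const.prodMk contDiff_id)
      exact ((this.differentiable (by norm_num)) s).hasDerivAt
    have hd2 := (((hasDerivAt_id s).const_mul 4).inv (by simpa using hs0.ne)).const_mul (‖x‖ ^ 2)
    have hd3 := (hd1.pow 2).mul hd2.exp
    refine (hd3.congr_deriv ?_).congr_of_eventuallyEq (Filter.Eventually.of_forall fun r => ?_)
    · have := hs0.ne
      simp only [id, Pi.pow_apply, Pi.inv_apply, div_eq_mul_inv]
      field_simp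
      ring
    · simp [div_eq_mul_inv]

/-- Euclidean-space case of the derivative formula for
`I_u(t) = (−4πt)^{−n/2} ∫ u(x,t)² e^{‖x‖²/4t} dx` along a caloric function with
polynomially bounded derivatives:
`I_u′(t) = −2(−4πt)^{−n/2} ∫ ‖∇ₓu‖² e^{‖x‖²/4t} dx ≤ 0`, so `I_u` is nonincreasing. -/
theorem Iu_derivative_formula_euclidean (n : ℕ)
    (u : EuclideanSpace ℝ (Fin n) × ℝ → ℝ) (hu : ContDiff ℝ (⊤ : ℕ∞) u)
    (hcal : ∀ (x : EuclideanSpace ℝ (Fin n)) (t : ℝ), t < 0 →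
      deriv (fun s => u (x, s)) t = lap (fun y => u (y, t)) x)
    (C d : ℝ) (hd : 1 ≤ d)
    (hgrowth : ∀ (x : EuclideanSpace ℝ (Fin n)) (t : ℝ), t < 0 →
      |u (x, t)| + ‖fderiv ℝ (fun y => u (y, t)) x‖ +
          ‖iteratedFDeriv ℝ 2 (fun y => u (y, t)) x‖ ≤
        C * (1 + ‖x‖ ^ d + |t| ^ (d / 2))) :
    (∀ t : ℝ, t < 0 →
      HasDerivAt
        (fun s : ℝ => (-4 * π * s) ^ (-(n : ℝ) / 2) *
          ∫ x, (u (x, s)) ^ 2 * exp (‖x‖ ^ 2 / (4 * s)))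
        (-2 * (-4 * π * t) ^ (-(n : ℝ) / 2) *
          ∫ x, ‖fderiv ℝ (fun y => u (y, t)) x‖ ^ 2 * exp (‖x‖ ^ 2 / (4 * t))) t ∧
      -2 * (-4 * π * t) ^ (-(n : ℝ) / 2) *
          (∫ x, ‖fderiv ℝ (fun y => u (y, t)) x‖ ^ 2 * exp (‖x‖ ^ 2 / (4 * t))) ≤ 0) ∧
    AntitoneOn
      (fun t : ℝ => (-4 * π * t) ^ (-(n : ℝ) / 2) *
        ∫ x, (u (x, t)) ^ 2 * exp (‖x‖ ^ 2 / (4 * t)))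
      (Set.Iio 0) := by
  have hD := main_deriv n u hu hcal C d hd hgrowth
  have hN : ∀ t : ℝ, t < 0 → -2 * (-4 * π * t) ^ (-(n : ℝ) / 2) *
          (∫ x, ‖fderiv ℝ (fun y => u (y, t)) x‖ ^ 2 * exp (‖x‖ ^ 2 / (4 * t))) ≤ 0 := by
    intro t ht
    have hpos : 0 < -4 * π * t := by nlinarith [pi_pos]
    have h1 : 0 ≤ (-4 * π * t) ^ (-(n : ℝ) / 2) := Real.rpow_nonneg hpos.le _
    have h2 : 0 ≤ ∫ x, ‖fderiv ℝ (fun y => u (y, t)) x‖ ^ 2 * exp (‖x‖ ^ 2 / (4 * t)) :=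
      integral_nonneg fun x => by positivity
    nlinarith [mul_nonneg h1 h2]
  refine ⟨fun t ht => ⟨hD t ht, hN t ht⟩, ?_⟩
  refine antitoneOn_of_deriv_nonpos (convex_Iio 0)
    (fun t ht => (hD t ht).continuousAt.continuousWithinAt) ?_ ?_
  · intro t ht
    rw [interior_Iio] at ht
    exact (hD t ht).differentiableAt.differentiableWithinAt
  · intro t ht
    rw [interior_Iio] at ht
    rw [(hD t ht).deriv]
    exact hN t ht
end

section
/- Let Ω > 1, δ > 0, d > 0, C > 0, ℓ ≥ 1 an integer, and for i = 1, …, ℓ let g_i : ℕ → ℝ be functions for which there exists m₀ ∈ ℕ such that 0 < g_i(m) ≤ g_i(m+1) for all m ≥ m₀ and all i, and g_i(m) ≤ C(1 + Ω^m)^d for all m and all i. Then there are infinitely many m ∈ ℕ with (1/ℓ) · Σ_{i=1}^{ℓ} g_i(m)/g_i(m+1) ≥ Ω^{−d − δ/ℓ}. (Sequence form of the paper's Lemma 4.3, whose proof combines a pigeonhole argument on the products Π_i g_i(m) with the arithmetic–geometric mean inequality.) -/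
open Real

/-- Sequence form of the selection lemma: if each `g i` is eventually positive and
nondecreasing and grows at most like `C(1 + Ω^m)^d`, then there are infinitely many `m`
with `(1/ℓ) Σᵢ g i m / g i (m+1) ≥ Ω^{−d−δ/ℓ}`. -/
theorem good_scales_exist (Ω δ d C : ℝ) (hΩ : 1 < Ω) (hδ : 0 < δ) (hd : 0 < d)
    (hC : 0 < C) (ℓ : ℕ) (hℓ : 1 ≤ ℓ) (g : Fin ℓ → ℕ → ℝ)
    (hmono : ∃ m₀ : ℕ, ∀ i : Fin ℓ, ∀ m : ℕ, m₀ ≤ m → 0 < g i m ∧ g i m ≤ g i (m + 1))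
    (hbound : ∀ (i : Fin ℓ) (m : ℕ), g i m ≤ C * (1 + Ω ^ m) ^ d) :
    {m : ℕ | Ω ^ (-d - δ / ℓ) ≤ (1 / ℓ) * ∑ i : Fin ℓ, g i m / g i (m + 1)}.Infinite := by
  intro hfin
  obtain ⟨m₀, hm⟩ := hmono
  obtain ⟨B, hB⟩ := hfin.bddAbove
  have hℓ0 : (0 : ℝ) < ℓ := by exact_mod_cast hℓ
  have hΩ0 : 0 < Ω := by linarith
  have hlam : 0 < Real.log Ω := Real.log_pos hΩ
  haveI : Nonempty (Fin ℓ) := ⟨⟨0, hℓ⟩⟩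
  set N := max m₀ (B + 1) with hN
  set ε := δ / ℓ with hε
  have hε0 : 0 < ε := div_pos hδ hℓ0
  have step : ∀ m, N ≤ m → (∑ i, Real.log (g i m)) + ℓ * ((d + ε) * Real.log Ω)
      ≤ ∑ i, Real.log (g i (m + 1)) := by
    intro m hNm
    have hm0 : m₀ ≤ m := le_trans (le_max_left _ _) hNm
    have hBm : B + 1 ≤ m := le_trans (le_max_right _ _) hNm
    have hnot : ¬ (Ω ^ (-d - ε) ≤ (1 / ℓ) * ∑ i : Fin ℓ, g i m / g i (m + 1)) := by
      intro h
      have := hB h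
      omega
    have hp : ∀ i, 0 < g i m := fun i => (hm i m hm0).1
    have hp' : ∀ i, 0 < g i (m + 1) := fun i => (hm i (m + 1) (by omega)).1
    set A := (1 / (ℓ : ℝ)) * ∑ i : Fin ℓ, g i m / g i (m + 1) with hA
    have hsum : 0 < ∑ i : Fin ℓ, g i m / g i (m + 1) :=
      Finset.sum_pos (fun i _ => div_pos (hp i) (hp' i)) Finset.univ_nonempty
    have hA0 : 0 < A := by positivity
    have hlogA : Real.log A < (-d - ε) * Real.log Ω := by
      rw [← Real.log_rpow hΩ0]
      exact Real.log_lt_log hA0 (not_le.mp hnot)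
    have key : ∀ i ∈ (Finset.univ : Finset (Fin ℓ)),
        Real.log (g i m) - Real.log (g i (m + 1)) - Real.log A
          ≤ (g i m / g i (m + 1)) / A - 1 := by
      intro i _
      have h1 := Real.log_le_sub_one_of_pos (div_pos (div_pos (hp i) (hp' i)) hA0)
      rwa [Real.log_div (div_pos (hp i) (hp' i)).ne' hA0.ne',
        Real.log_div (hp i).ne' (hp' i).ne'] at h1
    have h2 := Finset.sum_le_sum key
    simp only [Finset.sum_sub_distrib, Finset.sum_const, Finset.card_univ, Fintype.card_fin,
      nsmul_eq_mul, ← Finset.sum_div] at h2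
    have h3 : (∑ i : Fin ℓ, g i m / g i (m + 1)) / A = ℓ := by
      rw [hA]; field_simp
    rw [h3] at h2
    have h4 := mul_lt_mul_of_pos_left hlogA hℓ0
    nlinarith
  have iter : ∀ k : ℕ, (∑ i, Real.log (g i N)) + k * (ℓ * ((d + ε) * Real.log Ω))
      ≤ ∑ i, Real.log (g i (N + k)) := by
    intro k
    induction k with
    | zero => simp
    | succ k ih =>
      have := step (N + k) (by omega)
      rw [← add_assoc]
      push_cast
      linarith
  have upper : ∀ k : ℕ, ∑ i, Real.log (g i (N + k))
      ≤ ℓ * (Real.log C + d * (Real.log 2 + (N + k) * Real.log Ω)) := by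
    intro k
    have : ∀ i ∈ (Finset.univ : Finset (Fin ℓ)), Real.log (g i (N + k))
        ≤ Real.log C + d * (Real.log 2 + (N + k) * Real.log Ω) := by
      intro i _
      have hp : 0 < g i (N + k) := (hm i _ (by omega)).1
      have h1 : (1 : ℝ) ≤ Ω ^ (N + k) := one_le_pow₀ hΩ.le
      have h0 : 0 < 1 + Ω ^ (N + k) := by linarith
      have h2 := Real.log_le_log hp (hbound i (N + k))
      rw [Real.log_mul hC.ne' (Real.rpow_pos_of_pos h0 d).ne', Real.log_rpow h0] at h2
      have h3 : Real.log (1 + Ω ^ (N + k)) ≤ Real.log 2 + (N + k) * Real.log Ω := by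
        have h4 : Real.log (1 + Ω ^ (N + k)) ≤ Real.log (2 * Ω ^ (N + k)) :=
          Real.log_le_log h0 (by linarith)
        rw [Real.log_mul (by norm_num) (by positivity), Real.log_pow] at h4
        push_cast at h4
        exact h4
      have := mul_le_mul_of_nonneg_left h3 hd.le
      linarith
    have h := Finset.sum_le_sum this
    simpa only [Finset.sum_const, Finset.card_univ, Fintype.card_fin, nsmul_eq_mul] using h
  have hpos : 0 < ℓ * (ε * Real.log Ω) := by positivity
  obtain ⟨k, hk⟩ := exists_nat_gt ((ℓ * (Real.log C + d * (Real.log 2 + N * Real.log Ω))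
    - ∑ i, Real.log (g i N)) / (ℓ * (ε * Real.log Ω)))
  rw [div_lt_iff₀ hpos] at hk
  have h1 := iter k
  have h2 := upper k
  linarith
end
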